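/- Let A be a basic indecomposable artin algebra and Γ a finite cyclic component of the Auslander–Reiten quiver Γ_A. Then Γ contains an indecomposable projective module and an indecomposable injective module. -/

import Mathlib

/-!
Common framework: finite length modules over a ring, the radical of the module
category, cycles of indecomposable modules, Auslander-Reiten quivers,
translation quivers notions, and classes of artin algebras.
Right `A`-modules are formalized as left `Aᵐᵒᵖ`-modules.
-/

universe u

/-- A bundled object of `mod R`: a finite length `R`-module. -/
structure ModA (R : Type u) [Ring R] : Type (u + 1) where
  M : Type u
  [acg : AddCommGroup M]
  [mod : Module R M]
  finLen : IsFiniteLength R M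

attribute [instance] ModA.acg ModA.mod

/-- A bundled (not necessarily finite length) `R`-module. -/
structure RawMod (R : Type u) [Ring R] : Type (u + 1) where
  M : Type u
  [acg : AddCommGroup M]
  [mod : Module R M]

attribute [instance] RawMod.acg RawMod.mod

/-- A module is indecomposable iff it is nonzero and its endomorphism ring has no
nontrivial idempotents. -/
def IsIndecMod (R : Type u) [Ring R] (M : Type u) [AddCommGroup M] [Module R M] : Prop :=
  Nontrivial M ∧ ∀ f : Module.End R M, f * f = f → f = 0 ∨ f = 1

namespace ModA

variable {R : Type u} [Ring R]

/-- Indecomposability of an object of `mod R`. -/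
def IsIndec (X : ModA R) : Prop := IsIndecMod R X.M

/-- Isomorphism of objects of `mod R`. -/
def Iso (X Y : ModA R) : Prop := Nonempty (X.M ≃ₗ[R] Y.M)

end ModA

/-- Membership in the radical `rad(X, Y)` of the category `mod R`: a map `f : X → Y`
belongs to the radical iff for every indecomposable `Z` and all `g : Z → X`, `h : Y → Z`
the composite `h ∘ f ∘ g` is not an isomorphism. -/
def InRad {R : Type u} [Ring R] {X Y : ModA R} (f : X.M →ₗ[R] Y.M) : Prop :=
  ∀ Z : ModA R, Z.IsIndec → ∀ (g : Z.M →ₗ[R] X.M) (h : Y.M →ₗ[R] Z.M),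
    ¬Function.Bijective (h.comp (f.comp g))

/-- The powers `rad^n` of the radical of `mod R`. -/
def radPow (R : Type u) [Ring R] : ℕ → ∀ X Y : ModA R, AddSubgroup (X.M →ₗ[R] Y.M)
  | 0, _, _ => ⊤
  | n + 1, X, Y => AddSubgroup.closure
      {f | ∃ (Z : ModA R) (g : X.M →ₗ[R] Z.M) (h : Z.M →ₗ[R] Y.M),
        InRad g ∧ h ∈ radPow R n Z Y ∧ f = h.comp g}

/-- Membership in the infinite radical `rad^∞ = ⋂ₙ radⁿ` of `mod R`. -/
def InRadInf {R : Type u} [Ring R] {X Y : ModA R} (f : X.M →ₗ[R] Y.M) : Prop :=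
  ∀ n : ℕ, f ∈ radPow R n X Y

/-- A cycle in `ind R`: a sequence of nonzero nonisomorphisms
`M₀ → M₁ → ⋯ → M_{r-1} → M_r = M₀` between indecomposable modules. -/
structure ModCycle (R : Type u) [Ring R] : Type (u + 1) where
  len : ℕ
  len_pos : 0 < len
  obj : Fin (len + 1) → ModA R
  obj_indec : ∀ i, (obj i).IsIndec
  closed : obj (Fin.last len) = obj 0
  hom : ∀ i : Fin len, (obj i.castSucc).M →ₗ[R] (obj i.succ).M
  hom_ne_zero : ∀ i, hom i ≠ 0
  hom_not_iso : ∀ i, ¬Function.Bijective (hom i)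

/-- A cycle is finite if none of its homomorphisms lies in the infinite radical. -/
def ModCycle.IsFiniteCycle {R : Type u} [Ring R] (c : ModCycle R) : Prop :=
  ∀ i, ¬InRadInf (c.hom i)

/-- The cycle passes through the module `M`. -/
def ModCycle.Passes {R : Type u} [Ring R] (c : ModCycle R) (M : ModA R) : Prop :=
  ∃ i, (c.obj i).Iso M

/-- A module is cycle-finite if it lies on a cycle and every cycle through it is finite. -/
def IsCycleFiniteModule {R : Type u} [Ring R] (M : ModA R) : Prop :=
  (∃ c : ModCycle R, c.Passes M) ∧ ∀ c : ModCycle R, c.Passes M → c.IsFiniteCycle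

/-- A module is directing if it lies on no cycle. -/
def IsDirectingModule {R : Type u} [Ring R] (M : ModA R) : Prop :=
  ¬∃ c : ModCycle R, c.Passes M

section Irreducible

variable {R : Type u} [Ring R]

/-- `f` is a split monomorphism (a section). -/
def SplitMonoMap {X Y : ModA R} (f : X.M →ₗ[R] Y.M) : Prop :=
  ∃ r : Y.M →ₗ[R] X.M, r.comp f = LinearMap.id

/-- `f` is a split epimorphism (a retraction). -/
def SplitEpiMap {X Y : ModA R} (f : X.M →ₗ[R] Y.M) : Prop :=
  ∃ s : Y.M →ₗ[R] X.M, f.comp s = LinearMap.id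

/-- `f` is an irreducible homomorphism. -/
def IsIrred {X Y : ModA R} (f : X.M →ₗ[R] Y.M) : Prop :=
  ¬SplitMonoMap f ∧ ¬SplitEpiMap f ∧
    ∀ (Z : ModA R) (g : X.M →ₗ[R] Z.M) (h : Z.M →ₗ[R] Y.M), h.comp g = f →
      SplitMonoMap g ∨ SplitEpiMap h

end Irreducible

/-- An almost split (Auslander-Reiten) sequence `0 → l → m → r → 0` in `mod R`. -/
structure AlmostSplitSeq (R : Type u) [Ring R] : Type (u + 1) where
  l : ModA R
  m : ModA R
  r : ModA R
  f : l.M →ₗ[R] m.M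
  g : m.M →ₗ[R] r.M
  inj : Function.Injective f
  surj : Function.Surjective g
  exact : LinearMap.range f = LinearMap.ker g
  not_split : ¬SplitEpiMap g
  l_indec : l.IsIndec
  r_indec : r.IsIndec
  right_almost : ∀ (Z : ModA R) (h : Z.M →ₗ[R] r.M), ¬SplitEpiMap h →
      ∃ h' : Z.M →ₗ[R] m.M, g.comp h' = h
  left_almost : ∀ (Z : ModA R) (h : l.M →ₗ[R] Z.M), ¬SplitMonoMap h →
      ∃ h' : m.M →ₗ[R] Z.M, h'.comp f = h

/-- `N ≅ τ M` for the Auslander-Reiten translation `τ = DTr`. -/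
def IsTauOf {R : Type u} [Ring R] (N M : ModA R) : Prop :=
  ∃ s : AlmostSplitSeq R, s.l.Iso N ∧ s.r.Iso M

/-- The indecomposable objects of `mod R`. -/
def IndecModA (R : Type u) [Ring R] := {X : ModA R // X.IsIndec}

/-- Isomorphism is an equivalence relation on indecomposable modules. -/
def isoSetoid (R : Type u) [Ring R] : Setoid (IndecModA R) where
  r X Y := X.1.Iso Y.1
  iseqv :=
    { refl := fun X => ⟨LinearEquiv.refl R X.1.M⟩
      symm := fun h => h.elim fun e => ⟨e.symm⟩
      trans := fun h h' => h.elim fun e => h'.elim fun e' => ⟨e.trans e'⟩ }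

/-- The vertices of the Auslander-Reiten quiver `Γ_R`: isomorphism classes of
indecomposable modules in `mod R`. -/
def ARVertex (R : Type u) [Ring R] := Quotient (isoSetoid R)

/-- The vertex of `Γ_R` given by an indecomposable module. -/
def ARVertex.mk {R : Type u} [Ring R] (X : IndecModA R) : ARVertex R :=
  Quotient.mk (isoSetoid R) X

section ARQuiver

variable {R : Type u} [Ring R]

/-- The arrows of the Auslander-Reiten quiver: `x → y` iff there is an irreducible
homomorphism between representatives. -/
def ARArrow (x y : ARVertex R) : Prop :=
  ∃ (X Y : IndecModA R) (f : X.1.M →ₗ[R] Y.1.M),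
    IsIrred f ∧ ARVertex.mk X = x ∧ ARVertex.mk Y = y

/-- `TauRel x y` iff `x = τ y` in the Auslander-Reiten quiver. -/
def TauRel (x y : ARVertex R) : Prop :=
  ∃ X Y : IndecModA R, ARVertex.mk X = x ∧ ARVertex.mk Y = y ∧ IsTauOf X.1 Y.1

/-- A vertex given by an (indecomposable) projective module. -/
def IsProjVertex (x : ARVertex R) : Prop :=
  ∃ X : IndecModA R, ARVertex.mk X = x ∧ Module.Projective R X.1.M

/-- A vertex given by an (indecomposable) injective module. -/
def IsInjVertex (x : ARVertex R) : Prop :=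
  ∃ X : IndecModA R, ARVertex.mk X = x ∧ Module.Injective R X.1.M

/-- The vertex lies on an oriented cycle of `Γ_R`. -/
def OnARCycle (x : ARVertex R) : Prop := Relation.TransGen ARArrow x x

/-- An edge (arrow in either direction) of the underlying graph of `Γ_R`. -/
def ARStep (x y : ARVertex R) : Prop := ARArrow x y ∨ ARArrow y x

/-- `D` is a connected component of the full subquiver of `Γ_R` on the vertex set `S`. -/
def IsComponentOf (S D : Set (ARVertex R)) : Prop :=
  D ⊆ S ∧ D.Nonempty ∧
    (∀ x ∈ D, ∀ y ∈ S, ARStep x y → y ∈ D) ∧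
    ∀ x ∈ D, ∀ y ∈ D, Relation.ReflTransGen (fun a b => a ∈ S ∧ b ∈ S ∧ ARStep a b) x y

/-- `C` is a connected component of `Γ_R`. -/
def IsARComponent (C : Set (ARVertex R)) : Prop := IsComponentOf Set.univ C

/-- The vertex lies on an oriented cycle all of whose vertices belong to `S`. -/
def OnCycleIn (S : Set (ARVertex R)) (x : ARVertex R) : Prop :=
  Relation.TransGen (fun a b => a ∈ S ∧ b ∈ S ∧ ARArrow a b) x x

/-- `Γ` is a connected component of the cyclic quiver `_cΓ_R` (a cyclic component). -/
def IsCyclicComponent (Γ : Set (ARVertex R)) : Prop :=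
  IsComponentOf {x | OnARCycle x} Γ

/-- A vertex represented by a cycle-finite module. -/
def IsCycleFiniteVertex (x : ARVertex R) : Prop :=
  ∃ X : IndecModA R, ARVertex.mk X = x ∧ IsCycleFiniteModule X.1

/-- A vertex represented by a directing module. -/
def IsDirectingVertex (x : ARVertex R) : Prop :=
  ∃ X : IndecModA R, ARVertex.mk X = x ∧ IsDirectingModule X.1

/-- A cycle-finite cyclic component: a cyclic component containing a cycle-finite module. -/
def IsCycleFiniteCyclicComponent (Γ : Set (ARVertex R)) : Prop :=
  IsCyclicComponent Γ ∧ ∃ x ∈ Γ, IsCycleFiniteVertex x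

/-- A full translation subquiver is cyclic if each of its vertices lies on an oriented
cycle inside it. -/
def IsCyclicSub (S : Set (ARVertex R)) : Prop := ∀ x ∈ S, OnCycleIn S x

/-- A full translation subquiver is coherent: every projective vertex is the start of an
infinite sectional path inside it, and every injective vertex is the end of an infinite
sectional path inside it. -/
def IsCoherentSub (S : Set (ARVertex R)) : Prop :=
  (∀ x ∈ S, IsProjVertex x → ∃ c : ℕ → ARVertex R, c 0 = x ∧ (∀ n, c n ∈ S) ∧
      (∀ n, ARArrow (c n) (c (n + 1))) ∧ ∀ n, ¬TauRel (c n) (c (n + 2))) ∧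
  (∀ x ∈ S, IsInjVertex x → ∃ c : ℕ → ARVertex R, c 0 = x ∧ (∀ n, c n ∈ S) ∧
      (∀ n, ARArrow (c (n + 1)) (c n)) ∧ ∀ n, ¬TauRel (c (n + 2)) (c n))

/-- `S` is a convex subquiver of (the full subquiver on) `C`: every path in `C` with
source and target in `S` has all its vertices in `S`. -/
def ConvexIn (C S : Set (ARVertex R)) : Prop :=
  ∀ (n : ℕ) (c : ℕ → ARVertex R), (∀ k ≤ n, c k ∈ C) →
    (∀ k < n, ARArrow (c k) (c (k + 1))) → c 0 ∈ S → c n ∈ S → ∀ k ≤ n, c k ∈ S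

/-- `S` is the core of the almost acyclic component `C`: the finite convex subquiver of
`C` containing all vertices lying on oriented cycles in `C`. -/
def IsCoreOf (C S : Set (ARVertex R)) : Prop :=
  S ⊆ C ∧ S.Finite ∧ ConvexIn C S ∧ ∀ x ∈ C, OnCycleIn C x → x ∈ S

/-- A component is almost acyclic if all but finitely many of its vertices do not lie on
oriented cycles. -/
def IsAlmostAcyclicComp (C : Set (ARVertex R)) : Prop := {x ∈ C | OnCycleIn C x}.Finite

/-- A component is almost cyclic if its cyclic part is cofinite. -/
def IsAlmostCyclicComp (C : Set (ARVertex R)) : Prop := {x ∈ C | ¬OnCycleIn C x}.Finite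

/-- Two vertices lie in the same `τ`-orbit. -/
def TauConn (x y : ARVertex R) : Prop :=
  Relation.ReflTransGen (fun a b => TauRel a b ∨ TauRel b a) x y

/-- The left stable part of `C`: remove the `τ`-orbits of projective vertices. -/
def leftStable (C : Set (ARVertex R)) : Set (ARVertex R) :=
  {x | x ∈ C ∧ ¬∃ y, TauConn x y ∧ IsProjVertex y}

/-- The right stable part of `C`: remove the `τ`-orbits of injective vertices. -/
def rightStable (C : Set (ARVertex R)) : Set (ARVertex R) :=
  {x | x ∈ C ∧ ¬∃ y, TauConn x y ∧ IsInjVertex y}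

/-- The stable part of `C`. -/
def stablePart (C : Set (ARVertex R)) : Set (ARVertex R) := leftStable C ∩ rightStable C

end ARQuiver

/-- The arrows of the translation quiver `ℤA∞/(τ^r)`, with vertices indexed by the
`τ`-orbit coordinate in `ZMod r` and the quasi-length (minus one) in `ℕ`. -/
def TubeArrow {r : ℕ} : ZMod r × ℕ → ZMod r × ℕ → Prop := fun u v =>
  (v.1 = u.1 ∧ v.2 = u.2 + 1) ∨ (v.1 = u.1 + 1 ∧ u.2 = v.2 + 1)

section Tube

variable {R : Type u} [Ring R]

/-- `T` is a stable tube of rank `r`, parametrized by `φ : ℤA∞/(τ^r) → Γ_R`. -/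
def IsStableTubeVia (T : Set (ARVertex R)) (r : ℕ) (φ : ZMod r × ℕ → ARVertex R) : Prop :=
  0 < r ∧ Function.Injective φ ∧ Set.range φ = T ∧
    (∀ u v, TubeArrow u v → ARArrow (φ u) (φ v)) ∧
    (∀ u v, ARArrow (φ u) (φ v) → TubeArrow u v) ∧
    ∀ (i : ZMod r) (n : ℕ), TauRel (φ (i - 1, n)) (φ (i, n))

/-- `T` is a stable tube. -/
def IsStableTube (T : Set (ARVertex R)) : Prop := ∃ r φ, IsStableTubeVia T r φ

end Tube

section Separating

variable {R : Type u} [Ring R]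

/-- A family of vertices is generalized standard if `rad^∞` vanishes between its modules. -/
def GeneralizedStandardSet (U : Set (ARVertex R)) : Prop :=
  ∀ X Y : IndecModA R, ARVertex.mk X ∈ U → ARVertex.mk Y ∈ U →
    ∀ f : X.1.M →ₗ[R] Y.1.M, InRadInf f → f = 0

/-- `S` is (isomorphic to) a composition factor (a subquotient) of `M`. -/
def IsCompFactorMod (R : Type u) [Ring R] (S : Type u) [AddCommGroup S] [Module R S]
    (M : Type u) [AddCommGroup M] [Module R M] : Prop :=
  ∃ N' N : Submodule R M, N' ≤ N ∧
    Nonempty ((↥N ⧸ N'.comap N.subtype) ≃ₗ[R] S)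

/-- A family of vertices is sincere if every simple module is a composition factor of one
of its modules. -/
def SincereSet (U : Set (ARVertex R)) : Prop :=
  ∀ (S : Type u) [AddCommGroup S] [Module R S], IsSimpleModule R S →
    ∃ x ∈ U, ∃ X : IndecModA R, ARVertex.mk X = x ∧ IsCompFactorMod R S X.1.M

/-- All homomorphisms from modules with vertex in `U` to modules with vertex in `V` vanish. -/
def HomVanish (U V : Set (ARVertex R)) : Prop :=
  ∀ X Y : IndecModA R, ARVertex.mk X ∈ U → ARVertex.mk Y ∈ V →
    ∀ f : X.1.M →ₗ[R] Y.1.M, f = 0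

/-- Every homomorphism from a module in `U` to a module in `V` factors through the
additive closure of the modules in `W`. -/
def FactorsThrough (U W V : Set (ARVertex R)) : Prop :=
  ∀ X Y : IndecModA R, ARVertex.mk X ∈ U → ARVertex.mk Y ∈ V →
    ∀ f : X.1.M →ₗ[R] Y.1.M, ∃ (k : ℕ) (Z : Fin k → IndecModA R)
      (g : ∀ i, X.1.M →ₗ[R] (Z i).1.M) (h : ∀ i, (Z i).1.M →ₗ[R] Y.1.M),
      (∀ i, ARVertex.mk (Z i) ∈ W) ∧ f = ∑ i, (h i).comp (g i)

/-- `cs` is a separating family of components of `Γ_R`. -/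
def IsSeparatingFamily (cs : Set (Set (ARVertex R))) : Prop :=
  ∃ ps qs : Set (Set (ARVertex R)),
    (∀ C ∈ ps, IsARComponent C) ∧ (∀ C ∈ cs, IsARComponent C) ∧ (∀ C ∈ qs, IsARComponent C) ∧
    (∀ C, IsARComponent C → C ∈ ps ∨ C ∈ cs ∨ C ∈ qs) ∧
    (∀ C ∈ ps, C ∉ cs ∧ C ∉ qs) ∧ (∀ C ∈ cs, C ∉ qs) ∧
    SincereSet (⋃₀ cs) ∧ GeneralizedStandardSet (⋃₀ cs) ∧
    HomVanish (⋃₀ qs) (⋃₀ ps) ∧ HomVanish (⋃₀ qs) (⋃₀ cs) ∧ HomVanish (⋃₀ cs) (⋃₀ ps) ∧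
    FactorsThrough (⋃₀ ps) (⋃₀ cs) (⋃₀ qs)

end Separating

/-! ### Classes of algebras via their Auslander-Reiten quivers.
For a ring `B`, the category `mod B` of finitely generated right `B`-modules is
realized as the category of finite length left `Bᵐᵒᵖ`-modules. -/

/-- An algebra is of finite representation type if it has only finitely many isomorphism
classes of indecomposable finitely generated (right) modules. -/
def IsFiniteRepTypeAlg (B : Type u) [Ring B] : Prop :=
  (Set.univ : Set (ARVertex Bᵐᵒᵖ)).Finite

/-- An algebra is cycle-finite if all cycles in `ind B` are finite. -/
def IsCycleFiniteAlg (B : Type u) [Ring B] : Prop :=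
  ∀ c : ModCycle Bᵐᵒᵖ, c.IsFiniteCycle

/-- A generalized multicoil algebra: an algebra whose Auslander-Reiten quiver admits a
separating family of almost cyclic coherent components. -/
def IsGeneralizedMulticoilAlgebra (B : Type u) [Ring B] : Prop :=
  ∃ cs : Set (Set (ARVertex Bᵐᵒᵖ)),
    (∀ C ∈ cs, IsARComponent C ∧ IsAlmostCyclicComp C ∧ IsCoherentSub C) ∧
    IsSeparatingFamily cs

/-- A generalized double tilted algebra: an algebra whose Auslander-Reiten quiver admits
a separating almost acyclic component (a connecting component). -/
def IsGeneralizedDoubleTiltedAlgebra (B : Type u) [Ring B] : Prop :=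
  ∃ C : Set (ARVertex Bᵐᵒᵖ),
    IsARComponent C ∧ IsAlmostAcyclicComp C ∧ IsSeparatingFamily {C}

/-- A concealed canonical algebra: an algebra whose Auslander-Reiten quiver admits a
separating family of stable tubes. -/
def IsConcealedCanonicalAlgebra (B : Type u) [Ring B] : Prop :=
  ∃ ts : Set (Set (ARVertex Bᵐᵒᵖ)), (∀ T ∈ ts, IsStableTube T) ∧ IsSeparatingFamily ts

/-- A generic module: an indecomposable module of infinite length with finite endolength. -/
def IsGenericModule (R : Type u) [Ring R] (N : RawMod R) : Prop :=
  IsIndecMod R N.M ∧ ¬IsFiniteLength R N.M ∧ IsFiniteLength (Module.End R N.M) N.M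

/-- The endolength of a module: its length over its endomorphism ring. -/
noncomputable def endolength (R : Type u) [Ring R] (N : RawMod R) : WithBot ℕ∞ :=
  Order.krullDim (Submodule (Module.End R N.M) N.M)

/-- Generic tameness in the sense of Crawley-Boevey: for each `d` there are only finitely
many isomorphism classes of generic (right) modules of endolength `d`. -/
def IsGenericallyTameAlg (B : Type u) [Ring B] : Prop :=
  ∀ d : ℕ, ∃ (k : ℕ) (T : Fin k → RawMod Bᵐᵒᵖ),
    ∀ N : RawMod Bᵐᵒᵖ, IsGenericModule Bᵐᵒᵖ N → endolength Bᵐᵒᵖ N = (d : ℕ∞) →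
      ∃ i, Nonempty (N.M ≃ₗ[Bᵐᵒᵖ] (T i).M)

/-- A tame generalized multicoil algebra. -/
def IsTameGeneralizedMulticoilAlgebra (B : Type u) [Ring B] : Prop :=
  IsGeneralizedMulticoilAlgebra B ∧ IsGenericallyTameAlg B

/-- A tame generalized double tilted algebra. -/
def IsTameGeneralizedDoubleTiltedAlgebra (B : Type u) [Ring B] : Prop :=
  IsGeneralizedDoubleTiltedAlgebra B ∧ IsGenericallyTameAlg B

/-! ### The quiver of an algebra, convex idempotents, basic and connected algebras -/

section AlgebraSide

variable (A : Type u) [Ring A]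

/-- The Jacobson radical of `A` (as a left ideal; it is in fact two-sided). -/
def jacobsonRad : Ideal A := (⊥ : Ideal A).jacobson

/-- The square of the Jacobson radical of `A`. -/
def jacobsonRadSq : Ideal A :=
  Ideal.span {x | ∃ a ∈ jacobsonRad A, ∃ b ∈ jacobsonRad A, x = a * b}

/-- A primitive idempotent of `A`. -/
def IsPrimitiveIdempotent (e : A) : Prop :=
  IsIdempotentElem e ∧ e ≠ 0 ∧
    ∀ f g : A, IsIdempotentElem f → IsIdempotentElem g → f * g = 0 → g * f = 0 →
      e = f + g → f = 0 ∨ g = 0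

/-- A complete family of pairwise orthogonal primitive idempotents of `A`; its indices
are the vertices of the quiver `Q_A` of `A`. -/
structure CompleteIdemFamily (A : Type u) [Ring A] where
  n : ℕ
  e : Fin n → A
  prim : ∀ i, IsPrimitiveIdempotent A (e i)
  orth : ∀ i j, i ≠ j → e i * e j = 0
  total : ∑ i, e i = 1

/-- There is an arrow `i → j` in the quiver `Q_A` iff `e_i (rad A) e_j ⊄ (rad A)²`. -/
def QAarrow (E : CompleteIdemFamily A) (i j : Fin E.n) : Prop :=
  ∃ y ∈ jacobsonRad A, E.e i * y * E.e j ∉ jacobsonRadSq A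

/-- A set of vertices of `Q_A` is convex if every path of `Q_A` with source and target in
it has all its vertices in it. -/
def ConvexVertexSet (E : CompleteIdemFamily A) (S : Set (Fin E.n)) : Prop :=
  ∀ (n : ℕ) (c : ℕ → Fin E.n), (∀ k < n, QAarrow A E (c k) (c (k + 1))) →
    c 0 ∈ S → c n ∈ S → ∀ k ≤ n, c k ∈ S

/-- A convex idempotent of `A`: a sum of pairwise orthogonal primitive idempotents
corresponding to the vertices of a convex subquiver of `Q_A`. -/
def IsConvexIdempotent (e : A) : Prop :=
  ∃ (E : CompleteIdemFamily A) (S : Finset (Fin E.n)),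
    ConvexVertexSet A E ↑S ∧ e = ∑ i ∈ S, E.e i

/-- The corner `eAe` of `A` at an idempotent `e`, as a nonunital subring (it is a unital
ring with unit `e`). -/
def cornerRing (e : A) : NonUnitalSubring A where
  carrier := {x | e * x = x ∧ x * e = x}
  zero_mem' := by simp
  add_mem' := by
    rintro a b ⟨ha1, ha2⟩ ⟨hb1, hb2⟩
    constructor
    · rw [mul_add, ha1, hb1]
    · rw [add_mul, ha2, hb2]
  neg_mem' := by
    rintro a ⟨ha1, ha2⟩
    constructor
    · rw [mul_neg, ha1]
    · rw [neg_mul, ha2]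
  mul_mem' := by
    rintro a b ⟨ha1, ha2⟩ ⟨hb1, hb2⟩
    constructor
    · rw [← mul_assoc, ha1]
    · rw [mul_assoc, hb2]

/-- An (indecomposable =) connected algebra: no nontrivial central idempotents. -/
def IsConnectedAlgebra : Prop :=
  Nontrivial A ∧ ∀ e : A, IsIdempotentElem e → e ∈ Set.center A → e = 0 ∨ e = 1

/-- A basic algebra: distinct orthogonal primitive idempotents have nonisomorphic
associated indecomposable projective right modules. -/
def IsBasicAlgebra : Prop :=
  ¬∃ e f : A, IsPrimitiveIdempotent A e ∧ IsPrimitiveIdempotent A f ∧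
    e * f = 0 ∧ f * e = 0 ∧
    Nonempty ((Submodule.span Aᵐᵒᵖ {e} : Submodule Aᵐᵒᵖ A) ≃ₗ[Aᵐᵒᵖ]
      (Submodule.span Aᵐᵒᵖ {f} : Submodule Aᵐᵒᵖ A))

end AlgebraSide

/-! ### Support algebras and faithful algebras of families of vertices -/

section Support

variable (A : Type u) [Ring A]

/-- The radical of a module: the intersection of its maximal submodules. -/
def modRadical (R : Type u) [Ring R] (M : Type u) [AddCommGroup M] [Module R M] :
    Submodule R M :=
  sInf {N | IsCoatom N}

/-- The intersection `ann_A(Γ)` of the annihilators of all right `A`-modules whose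
vertices belong to `Γ`, as a two-sided ideal of `A`. -/
def annTwoSidedIdeal (Γ : Set (ARVertex Aᵐᵒᵖ)) : TwoSidedIdeal A :=
  TwoSidedIdeal.mk'
    {a | ∀ x ∈ Γ, ∀ X : IndecModA Aᵐᵒᵖ, ARVertex.mk X = x →
      ∀ m : X.1.M, MulOpposite.op a • m = 0}
    (by intro x _ X _ m; simp)
    (by
      intro a b ha hb x hx X hX m
      have : MulOpposite.op (a + b) • m = MulOpposite.op a • m + MulOpposite.op b • m := by
        rw [← add_smul]; rfl
      rw [this, ha x hx X hX m, hb x hx X hX m, add_zero])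
    (by
      intro a ha x hx X hX m
      have : MulOpposite.op (-a) • m = -(MulOpposite.op a • m) := by
        rw [← neg_smul]; rfl
      rw [this, ha x hx X hX m, neg_zero])
    (by
      intro a b hb x hx X hX m
      have : MulOpposite.op (a * b) • m = MulOpposite.op b • (MulOpposite.op a • m) := by
        rw [← mul_smul]; rfl
      rw [this, hb x hx X hX _])
    (by
      intro a b ha x hx X hX m
      have : MulOpposite.op (a * b) • m = MulOpposite.op b • (MulOpposite.op a • m) := by
        rw [← mul_smul]; rfl
      rw [this, ha x hx X hX m, smul_zero])

/-- The faithful algebra `B(Γ) = A / ann_A(Γ)` of a family `Γ` of vertices of `Γ_A`. -/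
abbrev faithfulAlg (Γ : Set (ARVertex Aᵐᵒᵖ)) : Type u :=
  (annTwoSidedIdeal A Γ).ringCon.Quotient

/-- The canonical projection `A → B(Γ)`. -/
def faithfulProj (Γ : Set (ARVertex Aᵐᵒᵖ)) : A →+* faithfulAlg A Γ :=
  RingCon.mk' (annTwoSidedIdeal A Γ).ringCon

/-- The trace ideal `t_A(Γ)`: the two-sided ideal of `A` generated by the images of all
homomorphisms of right `A`-modules from `Q` to `A`. -/
def traceIdeal (Q : Submodule Aᵐᵒᵖ A) : TwoSidedIdeal A :=
  TwoSidedIdeal.span (⋃ f : ↥Q →ₗ[Aᵐᵒᵖ] A, Set.range f)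

/-- A decomposition `A = P_Γ ⊕ Q_Γ` of `A` in `mod A` such that the simple summands of
`P_Γ / rad P_Γ` are exactly the simple composition factors of the modules in `Γ`. -/
structure GammaDecomp (A : Type u) [Ring A] (Γ : Set (ARVertex Aᵐᵒᵖ)) where
  P : Submodule Aᵐᵒᵖ A
  Q : Submodule Aᵐᵒᵖ A
  compl : IsCompl P Q
  top_factors : ∀ (S : Type u) [AddCommGroup S] [Module Aᵐᵒᵖ S], IsSimpleModule Aᵐᵒᵖ S →
    (IsCompFactorMod Aᵐᵒᵖ S (↥P ⧸ modRadical Aᵐᵒᵖ ↥P) ↔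
      ∃ x ∈ Γ, ∃ X : IndecModA Aᵐᵒᵖ, ARVertex.mk X = x ∧ IsCompFactorMod Aᵐᵒᵖ S X.1.M)

end Support

/-- Restriction of scalars along a surjective ring homomorphism `π : A → B` identifies a
vertex `y` of `Γ_B` with a vertex `x` of `Γ_A`: representatives have the same underlying
group, with the `A`-action obtained from the `B`-action through `π`. -/
def VertexRestrictsTo {A B : Type u} [Ring A] [Ring B] (π : A →+* B)
    (y : ARVertex Bᵐᵒᵖ) (x : ARVertex Aᵐᵒᵖ) : Prop :=
  ∃ (N : IndecModA Bᵐᵒᵖ) (X : IndecModA Aᵐᵒᵖ), ARVertex.mk N = y ∧ ARVertex.mk X = x ∧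
    ∃ e : X.1.M ≃+ N.1.M, ∀ (a : A) (m : X.1.M),
      e (MulOpposite.op a • m) = MulOpposite.op (π a) • e m

/-! ### `K`-module structures on Hom-groups, lengths, and Ext -/

section KLength

variable (K B : Type u) [CommRing K] [Ring B] [Algebra K B]
variable (X N : Type u) [AddCommGroup X] [Module B X] [AddCommGroup N] [Module B N]

/-- The action of `K` on `B`-linear maps, through `algebraMap K B`. -/
def homKSMul (k : K) (f : X →ₗ[B] N) : X →ₗ[B] N where
  toFun x := algebraMap K B k • f x
  map_add' x y := by show algebraMap K B k • f (x + y) = _; rw [map_add, smul_add]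
  map_smul' b x := by
    simp only [map_smul, RingHom.id_apply, smul_smul]
    rw [Algebra.commutes]

/-- The `K`-module structure on the group of `B`-linear maps. -/
def homKModule : Module K (X →ₗ[B] N) where
  smul := homKSMul K B X N
  one_smul f := LinearMap.ext fun x => by
    show algebraMap K B 1 • f x = f x
    rw [map_one, one_smul]
  mul_smul k l f := LinearMap.ext fun x => by
    show algebraMap K B (k * l) • f x = algebraMap K B k • algebraMap K B l • f x
    rw [map_mul, mul_smul]
  smul_zero k := LinearMap.ext fun x => by
    show algebraMap K B k • (0 : X →ₗ[B] N) x = 0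
    simp
  smul_add k f g := LinearMap.ext fun x => by
    show algebraMap K B k • (f + g) x = algebraMap K B k • f x + algebraMap K B k • g x
    simp [smul_add]
  add_smul k l f := LinearMap.ext fun x => by
    show algebraMap K B (k + l) • f x = algebraMap K B k • f x + algebraMap K B l • f x
    rw [map_add, add_smul]
  zero_smul f := LinearMap.ext fun x => by
    show algebraMap K B 0 • f x = 0
    rw [map_zero, zero_smul]

/-- The length `|Hom_B(X, N)|` of the group of `B`-linear maps `X → N` as a `K`-module. -/
noncomputable def homKLength : WithBot ℕ∞ :=
  letI : Module K (X →ₗ[B] N) := homKModule K B X N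
  Order.krullDim (Submodule K (X →ₗ[B] N))

/-- The canonical surjection from the free module on (the underlying set of) `X` to `X`. -/
noncomputable def freeCover : (X →₀ B) →ₗ[B] X :=
  Finsupp.linearCombination B id

/-- The length `|Ext¹_B(X, N)|` of `Ext¹` as a `K`-module, computed as the cokernel of
`Hom_B(F, N) → Hom_B(Ω X, N)` for the canonical free cover `F → X` with kernel `Ω X`. -/
noncomputable def ext1KLength : WithBot ℕ∞ :=
  letI : Module K (↥(LinearMap.ker (freeCover B X)) →ₗ[B] N) :=
    homKModule K B (↥(LinearMap.ker (freeCover B X))) N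
  let D : Submodule K (↥(LinearMap.ker (freeCover B X)) →ₗ[B] N) :=
    { carrier := {f | ∃ g : (X →₀ B) →ₗ[B] N,
        f = g.comp (LinearMap.ker (freeCover B X)).subtype}
      add_mem' := by
        rintro f₁ f₂ ⟨g₁, rfl⟩ ⟨g₂, rfl⟩
        exact ⟨g₁ + g₂, rfl⟩
      zero_mem' := ⟨0, rfl⟩
      smul_mem' := by
        rintro k f ⟨g, rfl⟩
        exact ⟨homKSMul K B _ N k g, rfl⟩ }
  Order.krullDim (Submodule K ((↥(LinearMap.ker (freeCover B X)) →ₗ[B] N) ⧸ D))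

end KLength

/-- Vanishing of `Ext¹_B(X, N)`: every short exact sequence `0 → N → E → X → 0` splits. -/
def Ext1IsZero (B : Type u) [Ring B] (X : Type u) [AddCommGroup X] [Module B X]
    (N : Type u) [AddCommGroup N] [Module B N] : Prop :=
  ∀ (E : Type u) [AddCommGroup E] [Module B E], ∀ (f : N →ₗ[B] E) (g : E →ₗ[B] X),
    Function.Injective f → Function.Surjective g → LinearMap.range f = LinearMap.ker g →
    ∃ s : X →ₗ[B] E, g.comp s = LinearMap.id

/-- The syzygy `Ω X`: the kernel of the canonical free cover of `X`. -/
noncomputable def syzygyRaw (B : Type u) [Ring B] (X : RawMod B) : RawMod B :=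
  ⟨↥(LinearMap.ker (freeCover B X.M))⟩

/-- Iterated syzygies. -/
noncomputable def syzygyIter (B : Type u) [Ring B] : ℕ → RawMod B → RawMod B
  | 0, X => X
  | n + 1, X => syzygyRaw B (syzygyIter B n X)

/-- Vanishing of `Ext^r_B(X, N)` for `r ≥ 1`, via `Ext^r(X, N) ≅ Ext¹(Ω^{r-1} X, N)`. -/
noncomputable def ExtIsZero (B : Type u) [Ring B] (X N : RawMod B) (r : ℕ) : Prop :=
  Ext1IsZero B (syzygyIter B (r - 1) X).M N.M

/-- `[X] = [M]` in the Grothendieck group `K₀`: the modules `X` and `M` have the same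
composition factors including multiplicities. -/
def SameCompFactors {B : Type u} [Ring B] (X M : ModA B) : Prop :=
  ∃ (n : ℕ) (s : Fin (n + 1) → Submodule B X.M) (t : Fin (n + 1) → Submodule B M.M)
    (σ : Equiv.Perm (Fin n)),
    s 0 = ⊥ ∧ s (Fin.last n) = ⊤ ∧ t 0 = ⊥ ∧ t (Fin.last n) = ⊤ ∧
    (∀ i : Fin n, s i.castSucc ≤ s i.succ) ∧ (∀ i : Fin n, t i.castSucc ≤ t i.succ) ∧
    ∀ i : Fin n,
      IsSimpleModule B (↥(s i.succ) ⧸ (s i.castSucc).comap (s i.succ).subtype) ∧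
      Nonempty ((↥(s i.succ) ⧸ (s i.castSucc).comap (s i.succ).subtype) ≃ₗ[B]
        (↥(t (σ i).succ) ⧸ (t (σ i).castSucc).comap (t (σ i).succ).subtype))

/-- A torsion class in `mod B`: a class of modules closed under factor modules and
extensions. -/
def IsTorsionClass (B : Type u) [Ring B] (T : Set (ModA B)) : Prop :=
  (∀ M ∈ T, ∀ (N : ModA B) (g : M.M →ₗ[B] N.M), Function.Surjective g → N ∈ T) ∧
  ∀ (X E M : ModA B) (f : X.M →ₗ[B] E.M) (g : E.M →ₗ[B] M.M),
    Function.Injective f → Function.Surjective g → LinearMap.range f = LinearMap.ker g →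
    X ∈ T → M ∈ T → E ∈ T

/-- A torsion class is functorially finite iff it is of the form `Fac(M)`. -/
def IsFunctoriallyFinite (B : Type u) [Ring B] (T : Set (ModA B)) : Prop :=
  ∃ M : ModA B,
    T = {N | ∃ (k : ℕ) (g : (Fin k → M.M) →ₗ[B] N.M), Function.Surjective g}

/-- A module `M` is `τ`-rigid if `Hom(M, τM) = 0`. -/
def IsTauRigid {B : Type u} [Ring B] (M : ModA B) : Prop :=
  ∀ N : ModA B, IsTauOf N M → ∀ f : M.M →ₗ[B] N.M, f = 0

/-- A module `M` is rigid if `Ext¹(M, M) = 0`. -/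
def IsRigid {B : Type u} [Ring B] (M : ModA B) : Prop := Ext1IsZero B M.M M.M

/-- `α(M) ≤ 2`: the middle term of any almost split sequence ending at `M` has at most
two indecomposable direct summands. -/
def AlphaLe2 {B : Type u} [Ring B] (M : ModA B) : Prop :=
  ∀ s : AlmostSplitSeq B, s.r.Iso M →
    ∀ (k : ℕ) (N : Fin k → Submodule B s.m.M),
      (∀ i, IsIndecMod B ↥(N i)) → iSupIndep N → (⨆ i, N i) = ⊤ → k ≤ 2

namespace ARProof

/-- Existence of an injective envelope (elementwise essential). -/
theorem exists_injHull (K : Type u) [CommRing K] (N : Type u) [AddCommGroup N] [Module K N] :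
    ∃ (E : Type u) (_ : AddCommGroup E) (_ : Module K E) (ι : N →ₗ[K] E),
      Function.Injective ι ∧
      (∀ x : E, x ≠ 0 → ∃ (r : K) (n : N), r • x = ι n ∧ n ≠ 0) ∧
      (∀ (M M' : Type u) [AddCommGroup M] [Module K M] [AddCommGroup M'] [Module K M']
        (i : M →ₗ[K] M'), Function.Injective i → ∀ g : M →ₗ[K] E,
        ∃ h : M' →ₗ[K] E, ∀ x, h (i x) = g x) := by
  obtain ⟨I, _, _, hI, j, hj⟩ : ∃ (I : Type u) (_ : AddCommGroup I) (_ : Module K I)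
      (_ : Module.Injective K I) (j : N →ₗ[K] I), Function.Injective j := by
    let ip := (CategoryTheory.EnoughInjectives.presentation (ModuleCat.of K N)).some
    have := ip.injective
    refine ⟨ip.J, inferInstance, inferInstance,
      Module.injective_module_of_injective_object K ip.J, ip.f.hom, ?_⟩
    exact (ModuleCat.mono_iff_injective ip.f).1 ip.mono
  let N' : Submodule K I := LinearMap.range j
  let P : Set (Submodule K I) :=
    {F | N' ≤ F ∧ ∀ x ∈ F, x ≠ 0 → ∃ r : K, r • x ∈ N' ∧ r • x ≠ 0}
  have hN'P : N' ∈ P := ⟨le_rfl, fun x hx h0 => ⟨1, by simpa using hx, by simpa using h0⟩⟩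
  obtain ⟨E, hN'E, hE⟩ : ∃ E, N' ≤ E ∧ Maximal (· ∈ P) E := by
    refine zorn_le_nonempty₀ P (fun c hc hch y hy => ⟨sSup c, ⟨?_, ?_⟩, fun z hz => le_sSup hz⟩)
      N' hN'P
    · exact (hc hy).1.trans (le_sSup hy)
    · intro x hx h0
      obtain ⟨F, hF, hxF⟩ := (Submodule.mem_sSup_of_directed ⟨y, hy⟩ hch.directedOn).1 hx
      exact (hc hF).2 x hxF h0
  let Q : Set (Submodule K I) := {C | ∀ x ∈ C, x ∈ E → x = 0}
  obtain ⟨C, -, hC⟩ : ∃ C, (⊥ : Submodule K I) ≤ C ∧ Maximal (· ∈ Q) C := by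
    refine zorn_le_nonempty₀ Q (fun c hc hch y hy => ⟨sSup c, ?_, fun z hz => le_sSup hz⟩)
      ⊥ (fun x hx _ => by simpa using hx)
    intro x hx hxE
    obtain ⟨F, hF, hxF⟩ := (Submodule.mem_sSup_of_directed ⟨y, hy⟩ hch.directedOn).1 hx
    exact hc hF x hxF hxE
  -- E is essential in I / C
  have ess : ∀ x : I, x ∉ C → ∃ r : K, ∃ e ∈ E, e ≠ 0 ∧ r • x - e ∈ C := by
    intro x hx
    by_contra! hcon
    apply hx
    have : C ⊔ K ∙ x ∈ Q := by
      intro y hy hyE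
      obtain ⟨c, hc, z, hz, rfl⟩ := Submodule.mem_sup.1 hy
      obtain ⟨r, rfl⟩ := Submodule.mem_span_singleton.1 hz
      by_contra h0
      refine hcon r _ hyE h0 ?_
      have : r • x - (c + r • x) = -c := by abel
      rw [this]; exact C.neg_mem hc
    exact hC.2 this le_sup_left (Submodule.mem_sup_right (Submodule.mem_span_singleton_self x))
  let a : E →ₗ[K] I ⧸ C := C.mkQ.comp E.subtype
  have ha : Function.Injective a := by
    rw [← LinearMap.ker_eq_bot, LinearMap.ker_eq_bot']
    intro m hm
    have : (m : I) ∈ C := by simpa [a] using hm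
    exact Subtype.ext (hC.1 _ this m.2)
  obtain ⟨b, hb⟩ := Module.Injective.extension_property K _ _ _ a ha E.subtype
  have hb' : ∀ e : I, e ∈ E → b (C.mkQ e) = e := fun e he =>
    LinearMap.congr_fun hb (⟨e, he⟩ : E)
  have hWP : LinearMap.range b ∈ P := by
    constructor
    · intro x hx
      exact ⟨C.mkQ x, hb' x (hN'E hx)⟩
    · rintro _ ⟨q, rfl⟩ h0
      obtain ⟨x, rfl⟩ := C.mkQ_surjective q
      have hx : x ∉ C := by
        intro h; apply h0
        have : C.mkQ x = 0 := by simpa using h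
        rw [this, map_zero]
      obtain ⟨r, e, he, he0, hre⟩ := ess x hx
      have h1 : r • b (C.mkQ x) = e := by
        rw [← map_smul, ← map_smul]
        have : C.mkQ (r • x) = C.mkQ e := by
          rw [← sub_eq_zero, ← map_sub]; exact (Submodule.Quotient.mk_eq_zero C).2 hre
        rw [this, hb' e he]
      obtain ⟨s, hs, hs0⟩ := hE.1.2 e he he0
      refine ⟨s * r, ?_, ?_⟩ <;> rw [mul_smul, h1] <;> assumption
  have hWE : LinearMap.range b ≤ E := hE.2 hWP (fun x hx => ⟨C.mkQ x, hb' x hx⟩)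
  let p : I →ₗ[K] E := LinearMap.codRestrict E (b.comp C.mkQ) (fun x => hWE ⟨_, rfl⟩)
  have hp : ∀ e : E, p e = e := fun e => Subtype.ext (hb' e e.2)
  refine ⟨E, inferInstance, inferInstance, LinearMap.codRestrict E j (fun x => hN'E ⟨x, rfl⟩),
    ?_, ?_, ?_⟩
  · intro x y hxy
    exact hj (congrArg Subtype.val hxy)
  · intro x hx
    obtain ⟨r, ⟨n, hn⟩, h0⟩ := hE.1.2 x x.2 (by simpa using hx)
    refine ⟨r, n, Subtype.ext hn.symm, ?_⟩
    rintro rfl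
    apply h0; rw [← hn, map_zero]
  · intro M M' _ _ _ _ i hi g
    obtain ⟨h, hh⟩ := Module.Injective.extension_property K _ _ _ i hi (E.subtype.comp g)
    refine ⟨p.comp h, fun x => ?_⟩
    have := LinearMap.congr_fun hh x
    simp only [LinearMap.comp_apply] at this ⊢
    rw [this]; exact hp _

/-- A dualizing module for a commutative artinian ring. -/
theorem exists_dualizing (K : Type u) [CommRing K] [IsArtinianRing K] :
    ∃ (E : Type u) (_ : AddCommGroup E) (_ : Module K E),
      (∀ (M M' : Type u) [AddCommGroup M] [Module K M] [AddCommGroup M'] [Module K M']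
        (i : M →ₗ[K] M'), Function.Injective i → ∀ g : M →ₗ[K] E,
        ∃ h : M' →ₗ[K] E, ∀ x, h (i x) = g x) ∧
      (∀ (M : Type u) [AddCommGroup M] [Module K M] (x : M), x ≠ 0 →
        ∃ g : M →ₗ[K] E, g x ≠ 0) ∧
      (∀ (M : Type u) [AddCommGroup M] [Module K M] [Module.Finite K M],
        Module.Finite K (M →ₗ[K] E)) ∧
      (∀ (M : Type u) [AddCommGroup M] [Module K M] [Module.Finite K M]
        (Φ : (M →ₗ[K] E) →ₗ[K] E), ∃ x : M, ∀ g, Φ g = g x) := by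
  obtain ⟨E, _, _, ι, hι, ess, ext⟩ :=
    exists_injHull K (∀ m : MaximalSpectrum K, K ⧸ m.asIdeal)
  have cogen : ∀ (M : Type u) [AddCommGroup M] [Module K M] (x : M), x ≠ 0 →
        ∃ g : M →ₗ[K] E, g x ≠ 0 := by
    intro M _ _ x hx
    classical
    let t := LinearMap.toSpanSingleton K M x
    have hne : LinearMap.ker t ≠ ⊤ := by
      intro h
      have : (1 : K) ∈ LinearMap.ker t := h ▸ Submodule.mem_top
      apply hx; simpa [t] using this
    obtain ⟨m, hm, hle⟩ := Ideal.exists_le_maximal (LinearMap.ker t) hne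
    let i : (K ⧸ LinearMap.ker t) →ₗ[K] M := (LinearMap.ker t).liftQ t le_rfl
    have hi : Function.Injective i := by
      rw [← LinearMap.ker_eq_bot]; exact Submodule.ker_liftQ_eq_bot' _ _ rfl
    let q : (K ⧸ LinearMap.ker t) →ₗ[K] (K ⧸ m) := Submodule.factor hle
    obtain ⟨h, hh⟩ := ext _ _ i hi
      ((ι.comp (LinearMap.single K (fun m : MaximalSpectrum K => K ⧸ m.asIdeal) ⟨m, hm⟩)).comp q)
    refine ⟨h, fun h0 => ?_⟩
    have h1 := hh ((LinearMap.ker t).mkQ 1)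
    have h2 : i ((LinearMap.ker t).mkQ 1) = x := by
      show t 1 = x
      simp [t]
    rw [h2, h0] at h1
    simp only [LinearMap.comp_apply] at h1
    have h3 := hι (h1.symm.trans (map_zero ι).symm)
    have h4 := congrFun h3 ⟨m, hm⟩
    simp only [LinearMap.coe_single, Pi.single_eq_same, Pi.zero_apply] at h4
    have h5 : (Ideal.Quotient.mk m 1) = 0 := h4
    rw [Ideal.Quotient.eq_zero_iff_mem] at h5
    exact hm.ne_top ((Ideal.eq_top_iff_one _).2 h5)
  have simp_len : ∀ (S : Type u) [AddCommGroup S] [Module K S] [IsSimpleModule K S],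
      Module.length K (S →ₗ[K] E) ≤ 1 := by
    intro S _ _ _
    -- image of simple in N
    have := IsSimpleModule.nontrivial K S
    obtain ⟨s, hs⟩ := exists_ne (0 : S)
    have gen : ∀ y : S, ∃ r : K, r • s = y := fun y =>
      IsSimpleModule.toSpanSingleton_surjective K hs y
    have land : ∀ a : S →ₗ[K] E, ∃ n, ι n = a s := by
      intro a
      by_cases h0 : a s = 0
      · exact ⟨0, by simp [h0]⟩
      · obtain ⟨r, n, hr, hn⟩ := ess _ h0
        have hrs : r • s ≠ 0 := by
          intro h
          rw [← map_smul, h, map_zero] at hr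
          exact hn (hι (by rw [← hr, map_zero]))
        obtain ⟨c, hc⟩ := IsSimpleModule.toSpanSingleton_surjective K hrs s
        refine ⟨c • n, ?_⟩
        rw [map_smul, ← hr, ← map_smul, ← map_smul]
        congr 1
    have hmax : Ideal.IsMaximal (LinearMap.ker (LinearMap.toSpanSingleton K S s)) := by
      exact IsSimpleModule.ker_toSpanSingleton_isMaximal K hs
    set m : MaximalSpectrum K := ⟨_, hmax⟩ with hm
    have kill : ∀ (a : S →ₗ[K] E) n, ι n = a s → ∀ m', m' ≠ m → n m' = 0 := by
      intro a n hn m' hne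
      have : ¬ m.asIdeal ≤ m'.asIdeal := by
        intro h
        exact hne (MaximalSpectrum.ext (m.isMaximal.eq_of_le m'.isMaximal.ne_top h).symm)
      obtain ⟨r, hr, hr'⟩ := SetLike.not_le_iff_exists.1 this
      have h1 : r • s = 0 := by simpa [hm] using hr
      have h2 : r • n = 0 := hι (by rw [map_smul, hn, ← map_smul, h1, map_zero, map_zero])
      have h3 : r • n m' = 0 := congrFun h2 m'
      obtain ⟨k, hk⟩ := Ideal.Quotient.mk_surjective (n m')
      rw [← hk] at h3 ⊢
      have h4 : Ideal.Quotient.mk m'.asIdeal (r * k) = 0 := h3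
      rw [Ideal.Quotient.eq_zero_iff_mem] at h4 ⊢
      exact (m'.isMaximal.isPrime.mem_or_mem h4).resolve_left hr'
    by_cases hsub : ∀ a : S →ₗ[K] E, a = 0
    · have : Subsingleton (S →ₗ[K] E) := ⟨fun a b => by rw [hsub a, hsub b]⟩
      rw [Module.length_eq_zero]; exact zero_le_one
    · push Not at hsub
      obtain ⟨a, ha⟩ := hsub
      have mult : ∀ b : S →ₗ[K] E, ∃ c : K, c • a = b := by
        intro b
        obtain ⟨n, hn⟩ := land a
        obtain ⟨n', hn'⟩ := land b
        have hnm : n m ≠ 0 := by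
          intro h
          apply ha
          have : n = 0 := by
            funext m'
            by_cases h' : m' = m
            · rw [h', h]; rfl
            · exact kill a n hn m' h'
          ext y
          obtain ⟨r, rfl⟩ := gen y
          rw [map_smul, ← hn, this]; simp
        obtain ⟨k, hk⟩ := Ideal.Quotient.mk_surjective (n m)
        obtain ⟨k', hk'⟩ := Ideal.Quotient.mk_surjective (n' m)
        have := m.isMaximal
        let _ := Ideal.Quotient.field m.asIdeal
        obtain ⟨c, hc⟩ := Ideal.Quotient.mk_surjective (n' m / n m)
        refine ⟨c, ?_⟩
        have h1 : c • n = n' := by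
          funext m'
          by_cases h' : m' = m
          · rw [h']
            have : c • n m = Ideal.Quotient.mk m.asIdeal c * n m := Algebra.smul_def _ _
            rw [Pi.smul_apply, this, hc, div_mul_cancel₀ _ hnm]
          · rw [Pi.smul_apply, kill a n hn m' h', kill b n' hn' m' h', smul_zero]
        ext y
        obtain ⟨r, rfl⟩ := gen y
        rw [map_smul, map_smul, ← hn', ← h1, map_smul, LinearMap.smul_apply, hn]
      let T : S →ₗ[K] (S →ₗ[K] E) := by
        have h : LinearMap.ker (LinearMap.toSpanSingleton K S s) ≤
            LinearMap.ker (LinearMap.toSpanSingleton K (S →ₗ[K] E) a) := by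
          intro r hr
          have hr' : r • s = 0 := by simpa using hr
          have : r • a = 0 := by
            ext y
            obtain ⟨k, rfl⟩ := gen y
            rw [LinearMap.smul_apply, ← map_smul, smul_comm, hr', smul_zero, map_zero]; rfl
          simpa using this
        exact (Submodule.liftQ _ _ h).comp
          (LinearMap.quotKerEquivOfSurjective _
            (IsSimpleModule.toSpanSingleton_surjective K hs)).symm.toLinearMap
      have hT : Function.Surjective T := by
        intro b
        obtain ⟨c, rfl⟩ := mult b
        refine ⟨(LinearMap.quotKerEquivOfSurjective _
            (IsSimpleModule.toSpanSingleton_surjective K hs)) (Submodule.Quotient.mk c), ?_⟩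
        simp only [T, LinearMap.comp_apply, LinearEquiv.coe_coe, LinearEquiv.symm_apply_apply]
        rfl
      calc Module.length K (S →ₗ[K] E) ≤ Module.length K S := Module.length_le_of_surjective T hT
        _ = 1 := Module.length_eq_one K S
  have len : ∀ (M : Type u) [AddCommGroup M] [Module K M], IsFiniteLength K M →
      Module.length K (M →ₗ[K] E) ≤ Module.length K M := by
    intro M _ _ hM
    induction hM with
    | of_subsingleton => 
      rename_i M _ _ _
      have : Subsingleton (M →ₗ[K] E) := ⟨fun a b => by
        ext x; rw [Subsingleton.elim x 0, map_zero, map_zero]⟩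
      simp
    | of_simple_quotient hN ih =>
      rename_i M _ _ N hS
      let r : (M →ₗ[K] E) →ₗ[K] (N →ₗ[K] E) := LinearMap.lcomp K E N.subtype
      let q : ((M ⧸ N) →ₗ[K] E) →ₗ[K] (M →ₗ[K] E) := LinearMap.lcomp K E N.mkQ
      have h1 := Module.length_eq_add_of_exact (LinearMap.range q).subtype (LinearMap.range q).mkQ
        (Submodule.subtype_injective _) (Submodule.mkQ_surjective _)
        (LinearMap.exact_subtype_mkQ _)
      have h2 := Module.length_eq_add_of_exact N.subtype N.mkQ
        (Submodule.subtype_injective _) (Submodule.mkQ_surjective _)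
        (LinearMap.exact_subtype_mkQ _)
      rw [h1, h2, Module.length_eq_one K (M ⧸ N), add_comm]
      have hker : LinearMap.range q = LinearMap.ker r := by
        ext f
        constructor
        · rintro ⟨g, rfl⟩
          ext x
          show g (N.mkQ x) = 0
          have : N.mkQ (x : M) = 0 := by simp
          rw [this, map_zero]
        · intro hf
          refine ⟨N.liftQ f ?_, ?_⟩
          · intro x hx
            exact LinearMap.congr_fun (LinearMap.mem_ker.1 hf) (⟨x, hx⟩ : N)
          · ext x; rfl
      refine add_le_add ?_ ?_
      · refine le_trans ?_ ih
        refine Module.length_le_of_injective ((LinearMap.range q).liftQ r hker.le) ?_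
        rw [← LinearMap.ker_eq_bot]
        exact Submodule.ker_liftQ_eq_bot' _ _ hker
      · exact (Module.length_le_of_surjective q.rangeRestrict
          (LinearMap.surjective_rangeRestrict q)).trans (simp_len _)
  have fl : ∀ (M : Type u) [AddCommGroup M] [Module K M] [Module.Finite K M],
      IsFiniteLength K M := by
    intro M _ _ _
    exact isFiniteLength_iff_isNoetherian_isArtinian.2 ⟨inferInstance, inferInstance⟩
  have fin : ∀ (M : Type u) [AddCommGroup M] [Module K M] [Module.Finite K M],
        Module.Finite K (M →ₗ[K] E) := by
    intro M _ _ _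
    have h : IsFiniteLength K (M →ₗ[K] E) := by
      rw [← Module.length_ne_top_iff]
      exact ne_top_of_le_ne_top (Module.length_ne_top_iff.2 (fl M)) (len M (fl M))
    have := (isFiniteLength_iff_isNoetherian_isArtinian.1 h).1
    infer_instance
  refine ⟨E, inferInstance, inferInstance, ext, cogen, fin, ?_⟩
  intro M _ _ _ Φ
  have := fin M
  have := fin (M →ₗ[K] E)
  let ev : M →ₗ[K] ((M →ₗ[K] E) →ₗ[K] E) := LinearMap.applyₗ
  have hev : Function.Injective ev := by
    rw [← LinearMap.ker_eq_bot, LinearMap.ker_eq_bot']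
    intro x hx
    by_contra h0
    obtain ⟨g, hg⟩ := cogen M x h0
    exact hg (LinearMap.congr_fun hx g)
  have hle := (len (M →ₗ[K] E) (fl _)).trans (len M (fl M))
  have hsurj : LinearMap.range ev = ⊤ := by
    by_contra hne
    have h1 := Submodule.length_lt hne
    have h2 := Module.length_le_of_injective ev.rangeRestrict
      (LinearMap.injective_rangeRestrict_iff _ |>.2 hev)
    exact absurd (h1.trans_le hle) (not_lt.2 h2)
  obtain ⟨x, hx⟩ := LinearMap.range_eq_top.1 hsurj Φ
  exact ⟨x, fun g => by rw [← hx]; rfl⟩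

end ARProof

namespace ARProof

section raw
variable {R : Type u} [Ring R]
variable {M N Z : Type u} [AddCommGroup M] [Module R M] [AddCommGroup N] [Module R N]
  [AddCommGroup Z] [Module R Z]

theorem fact_epi (g : M →ₗ[R] N) (hg : Function.Surjective g) (h : M →ₗ[R] Z)
    (hk : ∀ x, g x = 0 → h x = 0) : ∃ c : N →ₗ[R] Z, ∀ x, c (g x) = h x := by
  refine ⟨((LinearMap.ker g).liftQ h (fun x hx => hk x hx)).comp
    (g.quotKerEquivOfSurjective hg).symm.toLinearMap, fun x => ?_⟩
  have : (g.quotKerEquivOfSurjective hg).symm (g x) = Submodule.Quotient.mk x := by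
    rw [LinearEquiv.symm_apply_eq]; rfl
  simp only [LinearMap.comp_apply, LinearEquiv.coe_coe, this]
  rfl

theorem fact_mono (f : M →ₗ[R] N) (hf : Function.Injective f) (h : Z →ₗ[R] N)
    (hk : ∀ x, ∃ y, f y = h x) : ∃ c : Z →ₗ[R] M, ∀ x, f (c x) = h x := by
  refine ⟨(LinearEquiv.ofInjective f hf).symm.toLinearMap.comp
    (LinearMap.codRestrict (LinearMap.range f) h hk), fun x => ?_⟩
  have := LinearEquiv.apply_symm_apply (LinearEquiv.ofInjective f hf)
    (LinearMap.codRestrict (LinearMap.range f) h hk x)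
  exact congrArg Subtype.val this

theorem splitMono_of_bij (h : M →ₗ[R] N) (k : N →ₗ[R] M) (hb : Function.Bijective (k.comp h)) :
    ∃ r : N →ₗ[R] M, r.comp h = LinearMap.id := by
  refine ⟨(LinearEquiv.ofBijective _ hb).symm.toLinearMap.comp k, ?_⟩
  ext x
  exact LinearEquiv.symm_apply_apply (LinearEquiv.ofBijective _ hb) x

theorem splitEpi_of_bij (h : M →ₗ[R] N) (k : N →ₗ[R] M) (hb : Function.Bijective (k.comp h)) :
    ∃ s : M →ₗ[R] N, k.comp s = LinearMap.id := by
  refine ⟨h.comp (LinearEquiv.ofBijective _ hb).symm.toLinearMap, ?_⟩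
  ext x
  exact LinearEquiv.apply_symm_apply (LinearEquiv.ofBijective _ hb) x

theorem bij_of_split (hN : IsIndecMod R N) (hM : Nontrivial M) (h : M →ₗ[R] N) (k : N →ₗ[R] M)
    (hb : k.comp h = LinearMap.id) : Function.Bijective h ∧ h.comp k = LinearMap.id := by
  have hkh : ∀ x, k (h x) = x := fun x => LinearMap.congr_fun hb x
  have h1 : h.comp k = LinearMap.id := by
    rcases hN.2 (h.comp k) (by ext x; simp [hkh]) with h0 | h0
    · exfalso
      obtain ⟨x, hx⟩ := exists_ne (0 : M)
      apply hx
      have := LinearMap.congr_fun h0 (h x)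
      simp only [LinearMap.comp_apply, hkh, LinearMap.zero_apply] at this
      rw [← hkh x, this, map_zero]
    · exact h0
  exact ⟨⟨Function.LeftInverse.injective hkh,
    Function.RightInverse.surjective (fun x => LinearMap.congr_fun h1 x)⟩, h1⟩

end raw

variable {R : Type u} [Ring R]

instance (X : ModA R) : IsNoetherian R X.M :=
  (isFiniteLength_iff_isNoetherian_isArtinian.1 X.finLen).1

instance (X : ModA R) : IsArtinian R X.M :=
  (isFiniteLength_iff_isNoetherian_isArtinian.1 X.finLen).2

theorem bij_or_nilp {X : ModA R} (hX : X.IsIndec) (f : Module.End R X.M) :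
    Function.Bijective f ∨ IsNilpotent f := by
  obtain ⟨n, hn⟩ := Filter.eventually_atTop.1 f.eventually_isCompl_ker_pow_range_pow
  have hc := hn (n + 1) (by omega)
  have hid := hX.2 (Submodule.projection _ _ hc.symm) (Submodule.isIdempotentElem_projection _)
  rcases hid with h | h
  · right
    refine ⟨n + 1, ?_⟩
    have : LinearMap.range (Submodule.projection _ _ hc.symm) = ⊥ := by rw [h]; simp
    rw [Submodule.range_projection] at this
    exact LinearMap.range_eq_bot.1 this
  · left
    have h1 : LinearMap.range (Submodule.projection _ _ hc.symm) = ⊤ := by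
      rw [h]; exact LinearMap.range_id
    have h2 : LinearMap.ker (Submodule.projection _ _ hc.symm) = ⊥ := by
      rw [h]; exact LinearMap.ker_id
    rw [Submodule.range_projection] at h1
    rw [Submodule.ker_projection] at h2
    have hb : Function.Bijective (f ^ (n + 1)) :=
      ⟨LinearMap.ker_eq_bot.1 h2, LinearMap.range_eq_top.1 h1⟩
    have hu := (Module.End.isUnit_iff _).2 hb
    rw [isUnit_pow_iff (by omega)] at hu
    exact (Module.End.isUnit_iff _).1 hu

theorem bij_or_bij {X : ModA R} (hX : X.IsIndec) (f g : Module.End R X.M) (h : f + g = 1) :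
    Function.Bijective f ∨ Function.Bijective g := by
  rcases bij_or_nilp hX f with hf | hf
  · exact Or.inl hf
  · right
    have : g = 1 - f := by rw [← h]; abel
    rw [this]
    exact (Module.End.isUnit_iff _).1 hf.isUnit_one_sub

theorem seq_not_splitMono (s : AlmostSplitSeq R) : ¬ SplitMonoMap s.f := by
  rintro ⟨ρ, hρ⟩
  apply s.not_split
  obtain ⟨σ, hσ⟩ := fact_epi s.g s.surj (LinearMap.id - s.f.comp ρ) (by
    intro x hx
    have : x ∈ LinearMap.range s.f := by rw [s.exact]; exact hx
    obtain ⟨y, rfl⟩ := this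
    have := LinearMap.congr_fun hρ y
    simp only [LinearMap.comp_apply, LinearMap.id_apply] at this
    simp [this])
  refine ⟨σ, ?_⟩
  ext y
  obtain ⟨x, rfl⟩ := s.surj y
  simp only [LinearMap.comp_apply, hσ]
  have : s.g (s.f (ρ x)) = 0 := by
    have : s.f (ρ x) ∈ LinearMap.ker s.g := by rw [← s.exact]; exact ⟨_, rfl⟩
    exact this
  simp [this]

theorem seq_gf (s : AlmostSplitSeq R) (x) : s.g (s.f x) = 0 := by
  have : s.f x ∈ LinearMap.ker s.g := by rw [← s.exact]; exact ⟨_, rfl⟩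
  exact this

theorem seq_ex (s : AlmostSplitSeq R) (x) (h : s.g x = 0) : ∃ y, s.f y = x := by
  have : x ∈ LinearMap.range s.f := by rw [s.exact]; exact h
  exact this

/-- `p ∘ f` is not split epi. -/
theorem pf_not_split (s : AlmostSplitSeq R) {Z : ModA R} (hZ : Z.IsIndec)
    (p : s.m.M →ₗ[R] Z.M) :
    ¬ SplitMonoMap (p.comp s.f) ∧ ¬ SplitEpiMap (p.comp s.f) := by
  have h1 : ¬ SplitMonoMap (p.comp s.f) := by
    rintro ⟨r, hr⟩
    exact seq_not_splitMono s ⟨r.comp p, by rw [← hr]; rfl⟩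
  refine ⟨h1, ?_⟩
  rintro ⟨t, ht⟩
  exact h1 ⟨t, (bij_of_split s.l_indec hZ.1 t _ ht).2⟩

theorem gi_not_split (s : AlmostSplitSeq R) {Z : ModA R} (hZ : Z.IsIndec)
    (i : Z.M →ₗ[R] s.m.M) :
    ¬ SplitMonoMap (s.g.comp i) ∧ ¬ SplitEpiMap (s.g.comp i) := by
  have h1 : ¬ SplitEpiMap (s.g.comp i) := by
    rintro ⟨r, hr⟩
    exact s.not_split ⟨i.comp r, by rw [← hr]; rfl⟩
  refine ⟨?_, h1⟩
  rintro ⟨t, ht⟩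
  exact h1 ⟨t, (bij_of_split s.r_indec hZ.1 _ t ht).2⟩

theorem irred_gi (s : AlmostSplitSeq R) {Z : ModA R} (hZ : Z.IsIndec)
    (i : Z.M →ₗ[R] s.m.M) (p : s.m.M →ₗ[R] Z.M) (hpi : p.comp i = LinearMap.id) :
    IsIrred (s.g.comp i) := by
  refine ⟨(gi_not_split s hZ i).1, (gi_not_split s hZ i).2, ?_⟩
  intro W a b hab
  by_cases hb : SplitEpiMap b
  · exact Or.inr hb
  left
  obtain ⟨b', hb'⟩ := s.right_almost W b hb
  obtain ⟨c, hc⟩ := fact_mono s.f s.inj (i - b'.comp a) (by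
    intro x
    apply seq_ex
    have h1 := LinearMap.congr_fun hab x
    have h2 := LinearMap.congr_fun hb' (a x)
    simp only [LinearMap.comp_apply] at h1 h2
    simp [h1, h2])
  have hsum : (p.comp b').comp a + (p.comp s.f).comp c = (1 : Module.End R Z.M) := by
    ext x
    have h1 := LinearMap.congr_fun hpi x
    simp only [LinearMap.comp_apply, LinearMap.id_apply] at h1
    simp [hc, h1]
  rcases bij_or_bij hZ _ _ hsum with h | h
  · exact splitMono_of_bij _ _ h
  · exact absurd (splitEpi_of_bij _ _ h) (pf_not_split s hZ p).2

theorem irred_pf (s : AlmostSplitSeq R) {Z : ModA R} (hZ : Z.IsIndec)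
    (i : Z.M →ₗ[R] s.m.M) (p : s.m.M →ₗ[R] Z.M) (hpi : p.comp i = LinearMap.id) :
    IsIrred (p.comp s.f) := by
  refine ⟨(pf_not_split s hZ p).1, (pf_not_split s hZ p).2, ?_⟩
  intro W a b hab
  by_cases ha : SplitMonoMap a
  · exact Or.inl ha
  right
  obtain ⟨a', ha'⟩ := s.left_almost W a ha
  obtain ⟨c, hc⟩ := fact_epi s.g s.surj (p - b.comp a') (by
    intro x hx
    obtain ⟨y, rfl⟩ := seq_ex s x hx
    have h1 := LinearMap.congr_fun hab y
    have h2 := LinearMap.congr_fun ha' y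
    simp only [LinearMap.comp_apply] at h1 h2
    simp [h1, h2])
  have hsum : b.comp (a'.comp i) + c.comp (s.g.comp i) = (1 : Module.End R Z.M) := by
    ext x
    have h1 := LinearMap.congr_fun hpi x
    simp only [LinearMap.comp_apply, LinearMap.id_apply] at h1
    simp [hc, h1]
  rcases bij_or_bij hZ _ _ hsum with h | h
  · exact splitEpi_of_bij _ _ h
  · exact absurd (splitMono_of_bij _ _ h) (gi_not_split s hZ i).1

theorem irred_to_r (s : AlmostSplitSeq R) {Z : ModA R} (h : Z.M →ₗ[R] s.r.M)
    (hh : IsIrred h) : ∃ (i : Z.M →ₗ[R] s.m.M) (p : s.m.M →ₗ[R] Z.M),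
      p.comp i = LinearMap.id := by
  obtain ⟨i, hi⟩ := s.right_almost Z h hh.2.1
  rcases hh.2.2 _ i s.g hi with ⟨p, hp⟩ | h'
  · exact ⟨i, p, hp⟩
  · exact absurd h' s.not_split

theorem irred_from_l (s : AlmostSplitSeq R) {Z : ModA R} (h : s.l.M →ₗ[R] Z.M)
    (hh : IsIrred h) : ∃ (i : Z.M →ₗ[R] s.m.M) (p : s.m.M →ₗ[R] Z.M),
      p.comp i = LinearMap.id := by
  obtain ⟨p, hp⟩ := s.left_almost Z h hh.1
  rcases hh.2.2 _ s.f p hp with h' | ⟨i, hi⟩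
  · exact absurd h' (seq_not_splitMono s)
  · exact ⟨i, p, hi⟩

/-- Irreducibility is invariant under isomorphisms. -/
theorem irred_iso {X Y X' Y' : ModA R} (e : X'.M ≃ₗ[R] X.M) (e' : Y.M ≃ₗ[R] Y'.M)
    (f : X.M →ₗ[R] Y.M) (hf : IsIrred f) :
    IsIrred (e'.toLinearMap.comp (f.comp e.toLinearMap)) := by
  refine ⟨?_, ?_, ?_⟩
  · rintro ⟨r, hr⟩
    refine hf.1 ⟨e.toLinearMap.comp (r.comp e'.toLinearMap), ?_⟩
    ext x
    have := LinearMap.congr_fun hr (e.symm x)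
    simp at this
    simp [this]
  · rintro ⟨r, hr⟩
    refine hf.2.1 ⟨e.toLinearMap.comp (r.comp e'.toLinearMap), ?_⟩
    ext x
    have := LinearMap.congr_fun hr (e' x)
    simpa using this
  · intro W a b hab
    rcases hf.2.2 W (a.comp e.symm.toLinearMap) (e'.symm.toLinearMap.comp b) (by
      ext x
      have := LinearMap.congr_fun hab (e.symm x)
      simp only [LinearMap.comp_apply, LinearEquiv.coe_coe, LinearEquiv.apply_symm_apply] at this
      simp [this]) with ⟨r, hr⟩ | ⟨r, hr⟩
    · left
      refine ⟨e.symm.toLinearMap.comp r, ?_⟩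
      ext x
      have := LinearMap.congr_fun hr (e x)
      simp at this
      simp [this]
    · right
      refine ⟨r.comp e'.symm.toLinearMap, ?_⟩
      ext x
      have := LinearMap.congr_fun hr (e'.symm x)
      simp only [LinearMap.comp_apply, LinearEquiv.coe_coe, LinearMap.id_apply,
        EmbeddingLike.apply_eq_iff_eq] at this
      simpa using this

/-- Uniqueness of the left term. -/
theorem tau_unique (s s' : AlmostSplitSeq R) (e : s.r.M ≃ₗ[R] s'.r.M) :
    Nonempty (s.l.M ≃ₗ[R] s'.l.M) := by
  -- comparison maps
  have key : ∀ (s s' : AlmostSplitSeq R) (e : s.r.M ≃ₗ[R] s'.r.M),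
      ∃ (a : s.m.M →ₗ[R] s'.m.M) (b : s.l.M →ₗ[R] s'.l.M),
        (∀ x, s'.g (a x) = e (s.g x)) ∧ ∀ x, s'.f (b x) = a (s.f x) := by
    intro s s' e
    obtain ⟨a, ha⟩ := s'.right_almost s.m (e.toLinearMap.comp s.g) (by
      rintro ⟨t, ht⟩
      refine s.not_split ⟨t.comp e.toLinearMap, ?_⟩
      ext x
      have := LinearMap.congr_fun ht (e x)
      simpa using this)
    have ha' : ∀ x, s'.g (a x) = e (s.g x) := fun x => LinearMap.congr_fun ha x
    obtain ⟨b, hb⟩ := fact_mono s'.f s'.inj (a.comp s.f) (by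
      intro x
      apply seq_ex
      simp [ha', seq_gf])
    exact ⟨a, b, ha', hb⟩
  have key2 : ∀ (s : AlmostSplitSeq R) (a : s.m.M →ₗ[R] s.m.M) (b : s.l.M →ₗ[R] s.l.M),
      (∀ x, s.g (a x) = s.g x) → (∀ x, s.f (b x) = a (s.f x)) → Function.Bijective b := by
    intro s a b ha hb
    rcases bij_or_bij s.l_indec b (1 - b) (by abel) with h | h
    · exact h
    · exfalso
      obtain ⟨c, hc⟩ := fact_mono s.f s.inj (LinearMap.id - a) (by
        intro x
        apply seq_ex
        simp [ha])
      have : c.comp s.f = 1 - b := by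
        ext x
        apply s.inj
        simp [hc, hb]
      rw [← this] at h
      exact seq_not_splitMono s (splitMono_of_bij _ _ h)
  obtain ⟨a, b, ha, hb⟩ := key s s' e
  obtain ⟨a', b', ha', hb'⟩ := key s' s e.symm
  have h1 := key2 s (a'.comp a) (b'.comp b) (by simp [ha, ha']) (by simp [hb, hb'])
  have h2 := key2 s' (a.comp a') (b.comp b') (by simp [ha, ha']) (by simp [hb, hb'])
  refine ⟨LinearEquiv.ofBijective b ⟨?_, ?_⟩⟩
  · exact Function.Injective.of_comp (f := b') h1.1
  · exact Function.Surjective.of_comp (g := b') h2.2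

/-- Decomposition of the identity through indecomposables. -/
theorem decomp (M : ModA R) : (LinearMap.id : M.M →ₗ[R] M.M) ∈ AddSubgroup.closure
    {e : M.M →ₗ[R] M.M | ∃ (Z : ModA R) (i : Z.M →ₗ[R] M.M) (p : M.M →ₗ[R] Z.M),
      Z.IsIndec ∧ p.comp i = LinearMap.id ∧ e = i.comp p} := by
  suffices H : ∀ n : ℕ∞, ∀ M : ModA R, Module.length R M.M = n →
      (LinearMap.id : M.M →ₗ[R] M.M) ∈ AddSubgroup.closure
      {e : M.M →ₗ[R] M.M | ∃ (Z : ModA R) (i : Z.M →ₗ[R] M.M) (p : M.M →ₗ[R] Z.M),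
        Z.IsIndec ∧ p.comp i = LinearMap.id ∧ e = i.comp p} from H _ M rfl
  intro n
  induction n using WellFoundedLT.induction with
  | ind n ih =>
    intro M hn
    by_cases hnt : Nontrivial M.M
    swap
    · rw [not_nontrivial_iff_subsingleton] at hnt
      have : (LinearMap.id : M.M →ₗ[R] M.M) = 0 := by
        ext x; exact Subsingleton.elim _ _
      rw [this]; exact AddSubgroup.zero_mem _
    by_cases hind : M.IsIndec
    · exact AddSubgroup.subset_closure ⟨M, LinearMap.id, LinearMap.id, hind, rfl, rfl⟩
    have hex : ∃ e : Module.End R M.M, e * e = e ∧ e ≠ 0 ∧ e ≠ 1 := by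
      by_contra! hcon
      exact hind ⟨hnt, fun f hf => by
        by_cases h0 : f = 0
        · exact Or.inl h0
        · exact Or.inr (hcon f hf h0)⟩
    have piece : ∀ e : Module.End R M.M, e * e = e → e ≠ 1 →
        e ∈ AddSubgroup.closure
      {e : M.M →ₗ[R] M.M | ∃ (Z : ModA R) (i : Z.M →ₗ[R] M.M) (p : M.M →ₗ[R] Z.M),
        Z.IsIndec ∧ p.comp i = LinearMap.id ∧ e = i.comp p} := by
      intro e he h1
      let M' : ModA R := ⟨LinearMap.range e,
        M.finLen.of_injective (Submodule.subtype_injective _)⟩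
      let ι : M'.M →ₗ[R] M.M := (LinearMap.range e).subtype
      let π : M.M →ₗ[R] M'.M := e.rangeRestrict
      have hιπ : ι.comp π = e := rfl
      have hπι : π.comp ι = LinearMap.id := by
        ext ⟨_, x, rfl⟩
        exact LinearMap.congr_fun he x
      have hne : LinearMap.range e ≠ ⊤ := by
        intro htop
        apply h1
        ext x
        obtain ⟨y, rfl⟩ := LinearMap.range_eq_top.1 htop x
        exact LinearMap.congr_fun he y
      have hlt : Module.length R M'.M < n := by
        rw [← hn]; exact Submodule.length_lt hne
      have hid := ih _ hlt M' rfl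
      let Φ : (M'.M →ₗ[R] M'.M) →+ (M.M →ₗ[R] M.M) :=
        { toFun := fun a => ι.comp (a.comp π)
          map_zero' := by ext x; simp
          map_add' := by intro a b; ext x; simp }
      have h2 := AddSubgroup.mem_map_of_mem Φ hid
      have h3 : Φ LinearMap.id = e := hιπ
      rw [h3, AddMonoidHom.map_closure] at h2
      refine AddSubgroup.closure_mono ?_ h2
      rintro _ ⟨_, ⟨Z, i, p, hZ, hpi, rfl⟩, rfl⟩
      refine ⟨Z, ι.comp i, p.comp π, hZ, ?_, rfl⟩
      rw [← hpi]
      ext x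
      have := LinearMap.congr_fun hπι (i x)
      simp only [LinearMap.comp_apply, LinearMap.id_apply] at this ⊢
      rw [this]
    obtain ⟨e, he, h0, h1⟩ := hex
    have : (LinearMap.id : M.M →ₗ[R] M.M) = e + (1 - e) := by
      rw [add_sub_cancel]; rfl
    rw [this]
    refine AddSubgroup.add_mem _ (piece e he h1) (piece (1 - e) ?_ ?_)
    · rw [sub_mul, mul_sub, mul_sub, he]; simp
    · intro h; apply h0; simpa using h

end ARProof

namespace ARProof

variable {R : Type u} [Ring R]

/-- Bundle a finite length module. -/
def ofM (R : Type u) [Ring R] (M : Type u) [AddCommGroup M] [Module R M] [IsNoetherian R M]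
    [IsArtinian R M] : ModA R :=
  ⟨M, isFiniteLength_iff_isNoetherian_isArtinian.2 ⟨inferInstance, inferInstance⟩⟩

/-- Right almost split maps. -/
def IsSink {M X : ModA R} (g : M.M →ₗ[R] X.M) : Prop :=
  ¬ SplitEpiMap g ∧ ∀ (Z : ModA R) (h : Z.M →ₗ[R] X.M), ¬ SplitEpiMap h →
    ∃ h' : Z.M →ₗ[R] M.M, g.comp h' = h

/-- Left almost split maps. -/
def IsSource {Y M : ModA R} (f : Y.M →ₗ[R] M.M) : Prop :=
  ¬ SplitMonoMap f ∧ ∀ (Z : ModA R) (h : Y.M →ₗ[R] Z.M), ¬ SplitMonoMap h →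
    ∃ h' : M.M →ₗ[R] Z.M, h'.comp f = h

theorem exists_min_sink {X M₀ : ModA R} (g₀ : M₀.M →ₗ[R] X.M) (h₀ : IsSink g₀) :
    ∃ (M : ModA R) (g : M.M →ₗ[R] X.M), IsSink g ∧
      ∀ w : M.M →ₗ[R] M.M, g.comp w = g → Function.Bijective w := by
  let S : Set (ModA R) := {M | ∃ g : M.M →ₗ[R] X.M, IsSink g}
  obtain ⟨M, ⟨g, hg⟩, hmin⟩ := (InvImage.wf (fun M : ModA R => Module.length R M.M)
    (wellFounded_lt (α := ℕ∞))).has_min S ⟨M₀, g₀, h₀⟩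
  refine ⟨M, g, hg, fun w hw => ?_⟩
  have hw' : ∀ x, g (w x) = g x := fun x => LinearMap.congr_fun hw x
  have hs : Function.Surjective w := by
    by_contra hns
    have hr : LinearMap.range w ≠ ⊤ := fun h => hns (LinearMap.range_eq_top.1 h)
    refine hmin (ofM R (LinearMap.range w)) ?_ (Submodule.length_lt hr)
    refine ⟨g.comp (LinearMap.range w).subtype, ?_, ?_⟩
    · rintro ⟨s, hs⟩
      exact hg.1 ⟨(LinearMap.range w).subtype.comp s, hs⟩
    · intro Z h hh
      obtain ⟨h', hh'⟩ := hg.2 Z h hh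
      refine ⟨w.rangeRestrict.comp h', ?_⟩
      ext z
      exact (hw' _).trans (LinearMap.congr_fun hh' z)
  exact ⟨IsNoetherian.injective_of_surjective_endomorphism w hs, hs⟩

theorem exists_min_source {Y M₀ : ModA R} (f₀ : Y.M →ₗ[R] M₀.M) (h₀ : IsSource f₀) :
    ∃ (M : ModA R) (f : Y.M →ₗ[R] M.M), IsSource f ∧
      ∀ w : M.M →ₗ[R] M.M, w.comp f = f → Function.Bijective w := by
  let S : Set (ModA R) := {M | ∃ f : Y.M →ₗ[R] M.M, IsSource f}
  obtain ⟨M, ⟨f, hf⟩, hmin⟩ := (InvImage.wf (fun M : ModA R => Module.length R M.M)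
    (wellFounded_lt (α := ℕ∞))).has_min S ⟨M₀, f₀, h₀⟩
  refine ⟨M, f, hf, fun w hw => ?_⟩
  have hw' : ∀ x, w (f x) = f x := fun x => LinearMap.congr_fun hw x
  have hs : Function.Surjective w := by
    by_contra hns
    have hr : LinearMap.range w ≠ ⊤ := fun h => hns (LinearMap.range_eq_top.1 h)
    refine hmin (ofM R (LinearMap.range w)) ?_ (Submodule.length_lt hr)
    refine ⟨w.rangeRestrict.comp f, ?_, ?_⟩
    · rintro ⟨s, hs⟩
      exact hf.1 ⟨s.comp w.rangeRestrict, hs⟩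
    · intro Z h hh
      obtain ⟨h', hh'⟩ := hf.2 Z h hh
      refine ⟨h'.comp (LinearMap.range w).subtype, ?_⟩
      ext z
      exact (congrArg h' (hw' _)).trans (LinearMap.congr_fun hh' z)
  exact ⟨IsNoetherian.injective_of_surjective_endomorphism w hs, hs⟩

theorem exists_AR_of_sink {X M₀ : ModA R} (hX : X.IsIndec) (g₀ : M₀.M →ₗ[R] X.M)
    (h₀ : IsSink g₀) (hsurj : ∀ (M : ModA R) (g : M.M →ₗ[R] X.M), IsSink g →
      Function.Surjective g) : ∃ s : AlmostSplitSeq R, s.r = X := by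
  obtain ⟨M, g, hg, hmin⟩ := exists_min_sink g₀ h₀
  have hgs := hsurj M g hg
  let N : ModA R := ofM R (LinearMap.ker g)
  let f : N.M →ₗ[R] M.M := (LinearMap.ker g).subtype
  have hfi : Function.Injective f := Subtype.val_injective
  have hgf : ∀ n, g (f n) = 0 := fun n => n.2
  have hker : ∀ m, g m = 0 → ∃ n, f n = m := fun m hm => ⟨⟨m, hm⟩, rfl⟩
  clear_value f
  have hla : ∀ (Z : ModA R) (h : N.M →ₗ[R] Z.M), ¬SplitMonoMap h →
      ∃ h' : M.M →ₗ[R] Z.M, h'.comp f = h := by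
    intro Z h hh
    let Q : Submodule R (Z.M × M.M) := LinearMap.range (h.prod (-f))
    let PO : ModA R := ofM R ((Z.M × M.M) ⧸ Q)
    let q : Z.M × M.M →ₗ[R] PO.M := Q.mkQ
    have hqs : Function.Surjective q := Q.mkQ_surjective
    have hq0 : ∀ x, q x = 0 ↔ ∃ n, h n = x.1 ∧ - f n = x.2 := by
      intro x
      rw [show q x = 0 ↔ x ∈ Q from Submodule.Quotient.mk_eq_zero Q]
      constructor
      · rintro ⟨n, rfl⟩; exact ⟨n, rfl, rfl⟩
      · rintro ⟨n, h1, h2⟩; exact ⟨n, Prod.ext h1 h2⟩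
    clear_value q
    obtain ⟨g', hg'⟩ := fact_epi q hqs (g.comp (LinearMap.snd R Z.M M.M)) (by
      intro x hx
      obtain ⟨n, h1, h2⟩ := (hq0 x).1 hx
      simp [← h2, hgf])
    have hg'' : ∀ z m, g' (q (z, m)) = g m := fun z m => hg' (z, m)
    have hqn : ∀ n, q (h n, 0) = q (0, f n) := by
      intro n
      rw [← sub_eq_zero, ← map_sub, hq0]
      exact ⟨n, by simp, by simp⟩
    by_cases hsp : SplitEpiMap g'
    · obtain ⟨σ, hσ⟩ := hsp
      have hσ' : ∀ x, g' (σ x) = x := fun x => LinearMap.congr_fun hσ x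
      have hinl : Function.Injective (q.comp (LinearMap.inl R Z.M M.M)) := by
        rw [injective_iff_map_eq_zero]
        intro z hz
        obtain ⟨n, h1, h2⟩ := (hq0 _).1 hz
        simp only [LinearMap.inl_apply, neg_eq_zero] at h1 h2
        rw [← h1, hfi (h2.trans (map_zero f).symm), map_zero]
      obtain ⟨c, hc⟩ := fact_mono (q.comp (LinearMap.inl R Z.M M.M)) hinl
        (q.comp (LinearMap.inr R Z.M M.M) - σ.comp g) (by
          intro m
          obtain ⟨⟨z, m'⟩, hz⟩ := hqs ((q.comp (LinearMap.inr R Z.M M.M) - σ.comp g) m)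
          have h1 : g m' = 0 := by
            rw [← hg'' z m', hz]; simp [hg'', hσ']
          obtain ⟨n, rfl⟩ := hker m' h1
          refine ⟨z + h n, ?_⟩
          rw [← hz]
          have : (z, f n) = (z, 0) + (0, f n) := by simp
          rw [this, map_add q, ← hqn, ← map_add q]
          simp)
      refine ⟨c, ?_⟩
      ext n
      apply hinl
      simp only [LinearMap.comp_apply] at hc ⊢
      rw [hc]
      simp [hgf, ← hqn]
    · exfalso
      obtain ⟨t, ht⟩ := hg.2 PO g' hsp
      have ht' : ∀ x, g (t x) = g' x := fun x => LinearMap.congr_fun ht x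
      have hw := hmin (t.comp (q.comp (LinearMap.inr R Z.M M.M))) (by
        ext m; simp [ht', hg''])
      let w := LinearEquiv.ofBijective _ hw
      have hw1 : ∀ m, w m = t (q (0, m)) := fun m => rfl
      have hw2 : ∀ m, g (w.symm m) = g m := by
        intro m
        obtain ⟨m, rfl⟩ := w.surjective m
        rw [w.symm_apply_apply, hw1, ht', hg'']
      obtain ⟨r, hr⟩ := fact_mono f hfi
        (w.symm.toLinearMap.comp (t.comp (q.comp (LinearMap.inl R Z.M M.M)))) (by
          intro z
          apply hker
          simp [hw2, ht', hg''])
      refine hh ⟨r, ?_⟩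
      ext n
      apply hfi
      simp only [LinearMap.comp_apply, LinearMap.id_apply, hr, LinearMap.inl_apply, hqn]
      exact w.symm_apply_apply _
  have hns : ¬ ∃ r : M.M →ₗ[R] N.M, r.comp f = LinearMap.id := by
    rintro ⟨r, hr⟩
    have hr' : ∀ n, r (f n) = n := fun x => LinearMap.congr_fun hr x
    obtain ⟨s, hs⟩ := fact_epi g hgs (LinearMap.id - f.comp r) (by
      intro m hm
      obtain ⟨n, rfl⟩ := hker m hm
      simp [hr'])
    refine hg.1 ⟨s, ?_⟩
    ext x
    obtain ⟨m, rfl⟩ := hgs x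
    simp [hs, hgf]
  have hN : N.IsIndec := by
    refine ⟨?_, ?_⟩
    · by_contra hnt
      rw [not_nontrivial_iff_subsingleton] at hnt
      exact hns ⟨0, by ext n; exact Subsingleton.elim _ _⟩
    · intro e he
      by_contra! hne
      have he' : ∀ n, e (e n) = e n := fun n => LinearMap.congr_fun he n
      have h1 : ¬ SplitMonoMap (X := N) (Y := N) e := by
        rintro ⟨r, hr⟩
        apply hne.2
        ext n
        have := LinearMap.congr_fun hr (e n)
        have h2 := LinearMap.congr_fun hr n
        simp only [LinearMap.comp_apply, he', LinearMap.id_apply] at this h2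
        rw [Module.End.one_apply]
        exact this.symm.trans h2
      have h2 : ¬ SplitMonoMap (X := N) (Y := N) (1 - e) := by
        rintro ⟨r, hr⟩
        apply hne.1
        ext n
        have := LinearMap.congr_fun hr (e n)
        simp only [LinearMap.comp_apply, he', LinearMap.id_apply, LinearMap.sub_apply,
          Module.End.one_apply, sub_self, map_zero] at this
        exact this.symm
      obtain ⟨a, ha⟩ := hla N e h1
      obtain ⟨b, hb⟩ := hla N (1 - e) h2
      refine hns ⟨a + b, ?_⟩
      rw [LinearMap.add_comp, ha, hb]
      ext n; simp
  refine ⟨⟨N, M, X, f, g, hfi, hgs, ?_, hg.1, hN, hX, hg.2, hla⟩, rfl⟩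
  ext m
  exact ⟨by rintro ⟨n, rfl⟩; exact hgf n, hker m⟩

theorem exists_AR_of_source {Y M₀ : ModA R} (hY : Y.IsIndec) (f₀ : Y.M →ₗ[R] M₀.M)
    (h₀ : IsSource f₀) (hinj : ∀ (M : ModA R) (f : Y.M →ₗ[R] M.M), IsSource f →
      Function.Injective f) : ∃ s : AlmostSplitSeq R, s.l = Y := by
  obtain ⟨M, f, hf, hmin⟩ := exists_min_source f₀ h₀
  have hfi := hinj M f hf
  let N : ModA R := ofM R (M.M ⧸ LinearMap.range f)
  let g : M.M →ₗ[R] N.M := (LinearMap.range f).mkQ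
  have hgs : Function.Surjective g := Submodule.mkQ_surjective _
  have hker : ∀ m, g m = 0 → ∃ n, f n = m := fun m hm =>
    (Submodule.Quotient.mk_eq_zero (LinearMap.range f)).1 hm
  have hgf : ∀ n, g (f n) = 0 := fun n =>
    (Submodule.Quotient.mk_eq_zero (LinearMap.range f)).2 ⟨n, rfl⟩
  clear_value g
  have hra : ∀ (Z : ModA R) (h : Z.M →ₗ[R] N.M), ¬SplitEpiMap h →
      ∃ h' : Z.M →ₗ[R] M.M, g.comp h' = h := by
    intro Z h hh
    let Q : Submodule R (Z.M × M.M) := LinearMap.ker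
      (h.comp (LinearMap.fst R Z.M M.M) - g.comp (LinearMap.snd R Z.M M.M))
    let PB : ModA R := ofM R Q
    let i : PB.M →ₗ[R] Z.M × M.M := Q.subtype
    have hi : Function.Injective i := Subtype.val_injective
    have hiq : ∀ x, h (i x).1 = g (i x).2 := by
      intro x
      have := x.2
      rw [LinearMap.mem_ker] at this
      exact sub_eq_zero.1 this
    have hi0 : ∀ z m, h z = g m → ∃ y, i y = (z, m) := by
      intro z m hzm
      exact ⟨⟨(z, m), by simp [Q, hzm]⟩, rfl⟩
    clear_value i
    obtain ⟨f', hf'⟩ := fact_mono i hi ((LinearMap.inr R Z.M M.M).comp f) (by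
      intro y
      exact hi0 0 (f y) (by simp [hgf]))
    have hf1 : ∀ y, i (f' y) = (0, f y) := hf'
    by_cases hsp : SplitMonoMap f'
    · obtain ⟨ρ, hρ⟩ := hsp
      have hρ' : ∀ y, ρ (f' y) = y := fun x => LinearMap.congr_fun hρ x
      obtain ⟨c, hc⟩ := fact_epi ((LinearMap.fst R Z.M M.M).comp i) (by
          intro z
          obtain ⟨m, hm⟩ := hgs (h z)
          obtain ⟨y, hy⟩ := hi0 z m hm.symm
          exact ⟨y, by simp [hy]⟩)
        ((LinearMap.snd R Z.M M.M).comp i - f.comp ρ) (by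
          intro x hx
          have h1 := hiq x
          simp only [LinearMap.comp_apply, LinearMap.fst_apply] at hx
          rw [hx, map_zero] at h1
          obtain ⟨y, hy⟩ := hker _ h1.symm
          have : x = f' y := by
            apply hi
            rw [hf1]
            exact Prod.ext hx hy.symm
          simp [this, hf1, hρ'])
      refine ⟨c, ?_⟩
      ext z
      obtain ⟨m, hm⟩ := hgs (h z)
      obtain ⟨y, hy⟩ := hi0 z m hm.symm
      have := hc y
      simp only [LinearMap.comp_apply, hy, LinearMap.fst_apply] at this
      simp only [LinearMap.comp_apply, this]
      simp [hy, hgf, hm]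
    · exfalso
      obtain ⟨t, ht⟩ := hf.2 PB f' hsp
      have ht' : ∀ x, t (f x) = f' x := fun x => LinearMap.congr_fun ht x
      have hw := hmin ((LinearMap.snd R Z.M M.M).comp (i.comp t)) (by
        ext m; simp [ht', hf1])
      let w := LinearEquiv.ofBijective _ hw
      have hw1 : ∀ m, w m = (i (t m)).2 := fun m => rfl
      have hw2 : ∀ y, w.symm (f y) = f y := by
        intro y
        rw [LinearEquiv.symm_apply_eq, hw1, ht', hf1]
      obtain ⟨r, hr⟩ := fact_epi g hgs
        ((LinearMap.fst R Z.M M.M).comp (i.comp (t.comp w.symm.toLinearMap))) (by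
          intro m hm
          obtain ⟨y, rfl⟩ := hker m hm
          simp [hw2, ht', hf1])
      refine hh ⟨r, ?_⟩
      ext n
      obtain ⟨m, rfl⟩ := hgs n
      simp only [LinearMap.comp_apply, LinearMap.id_apply, hr, LinearMap.fst_apply, hiq,
        LinearEquiv.coe_coe]
      rw [← hw1, w.apply_symm_apply]
  have hns : ¬ ∃ r : N.M →ₗ[R] M.M, g.comp r = LinearMap.id := by
    rintro ⟨r, hr⟩
    have hr' : ∀ n, g (r n) = n := fun x => LinearMap.congr_fun hr x
    obtain ⟨s, hs⟩ := fact_mono f hfi (LinearMap.id - r.comp g) (by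
      intro m
      apply hker
      simp [hr'])
    refine hf.1 ⟨s, ?_⟩
    ext x
    apply hfi
    simp [hs, hgf]
  have hN : N.IsIndec := by
    refine ⟨?_, ?_⟩
    · by_contra hnt
      rw [not_nontrivial_iff_subsingleton] at hnt
      exact hns ⟨0, by ext n; exact Subsingleton.elim _ _⟩
    · intro e he
      by_contra! hne
      have he' : ∀ n, e (e n) = e n := fun n => LinearMap.congr_fun he n
      have h1 : ¬ SplitEpiMap (X := N) (Y := N) e := by
        rintro ⟨r, hr⟩
        apply hne.2
        ext n
        have h2 := LinearMap.congr_fun hr n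
        simp only [LinearMap.comp_apply, LinearMap.id_apply] at h2
        rw [Module.End.one_apply, ← h2, he']
      have h2 : ¬ SplitEpiMap (X := N) (Y := N) (1 - e) := by
        rintro ⟨r, hr⟩
        apply hne.1
        ext n
        have h2 := LinearMap.congr_fun hr n
        simp only [LinearMap.comp_apply, LinearMap.id_apply] at h2
        rw [← h2]
        simp [he']
      obtain ⟨a, ha⟩ := hra N e h1
      obtain ⟨b, hb⟩ := hra N (1 - e) h2
      refine hns ⟨a + b, ?_⟩
      rw [LinearMap.comp_add, ha, hb]
      ext n; simp
  refine ⟨⟨Y, M, N, f, g, hfi, hgs, ?_, hns, hY, hN, hra, hf.2⟩, rfl⟩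
  ext m
  exact ⟨by rintro ⟨n, rfl⟩; exact hgf n, hker m⟩

end ARProof

namespace ARProof

section exist

variable {K R : Type u} [CommRing K] [Ring R] [Algebra K R]

/-- The dual of the regular module with its left module structure. -/
def Nu (K R E : Type u) [CommRing K] [Ring R] [Algebra K R] [AddCommGroup E] [Module K E] :
    Type u := R →ₗ[K] E

section Nu
variable {E : Type u} [AddCommGroup E] [Module K E]

instance : AddCommGroup (Nu K R E) := inferInstanceAs (AddCommGroup (R →ₗ[K] E))
instance : Module K (Nu K R E) := inferInstanceAs (Module K (R →ₗ[K] E))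

/-- Evaluation of an element of `Nu`. -/
def Nu.ev (f : Nu K R E) : R →ₗ[K] E := f

/-- Build an element of `Nu`. -/
def Nu.of (f : R →ₗ[K] E) : Nu K R E := f

theorem Nu.ev_add (f g : Nu K R E) (s : R) : (f + g).ev s = f.ev s + g.ev s := rfl

theorem Nu.ev_of (f : R →ₗ[K] E) (s : R) : (Nu.of f).ev s = f s := rfl

theorem Nu.ext {f g : Nu K R E} (h : ∀ s, f.ev s = g.ev s) : f = g := LinearMap.ext h

instance : Module R (Nu K R E) where
  smul r f := Nu.of (f.ev.comp (LinearMap.mulRight K r))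
  one_smul f := Nu.ext fun s => congrArg f.ev (mul_one s)
  mul_smul r r' f := Nu.ext fun s => congrArg f.ev (mul_assoc s r r').symm
  smul_zero _ := Nu.ext fun _ => rfl
  smul_add _ _ _ := Nu.ext fun _ => rfl
  add_smul r r' f := Nu.ext fun s => (congrArg f.ev (mul_add s r r')).trans (map_add f.ev _ _)
  zero_smul f := Nu.ext fun s => (congrArg f.ev (mul_zero s)).trans (map_zero f.ev)

theorem Nu.ev_smul (r : R) (f : Nu K R E) (s : R) : (r • f).ev s = f.ev (s * r) := rfl

instance : IsScalarTower K R (Nu K R E) where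
  smul_assoc k r f := Nu.ext fun s => by
    change f.ev (s * (k • r)) = k • f.ev (s * r)
    rw [mul_smul_comm, map_smul]

end Nu

/-- The properties of the dualizing module that are used. -/
structure IsDual (K E : Type u) [CommRing K] [AddCommGroup E] [Module K E] : Prop where
  ext : ∀ (M M' : Type u) [AddCommGroup M] [Module K M] [AddCommGroup M'] [Module K M']
    (i : M →ₗ[K] M'), Function.Injective i → ∀ g : M →ₗ[K] E, ∃ h : M' →ₗ[K] E,
      ∀ x, h (i x) = g x
  cogen : ∀ (M : Type u) [AddCommGroup M] [Module K M] (x : M), x ≠ 0 →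
    ∃ g : M →ₗ[K] E, g x ≠ 0
  fin : ∀ (M : Type u) [AddCommGroup M] [Module K M], Module.Finite K M →
    Module.Finite K (M →ₗ[K] E)
  dd : ∀ (M : Type u) [AddCommGroup M] [Module K M] [Module.Finite K M]
    (Φ : (M →ₗ[K] E) →ₗ[K] E), ∃ x : M, ∀ g, Φ g = g x

theorem exists_isDual (K : Type u) [CommRing K] [IsArtinianRing K] :
    ∃ (E : Type u) (_ : AddCommGroup E) (_ : Module K E), IsDual K E := by
  obtain ⟨E, i1, i2, h1, h2, h3, h4⟩ := exists_dualizing K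
  exact ⟨E, i1, i2, ⟨h1, h2, h3, h4⟩⟩

variable {E : Type u} [AddCommGroup E] [Module K E]

theorem IsDual.ext_ker (hE : IsDual K E) {M N : Type u} [AddCommGroup M] [Module K M]
    [AddCommGroup N] [Module K N] (T : M →ₗ[K] N) (μ : M →ₗ[K] E)
    (h : ∀ x, T x = 0 → μ x = 0) : ∃ l : N →ₗ[K] E, ∀ x, l (T x) = μ x := by
  obtain ⟨c, hc⟩ := fact_epi T.rangeRestrict T.surjective_rangeRestrict μ
    (fun x hx => h x (congrArg Subtype.val hx))
  obtain ⟨l, hl⟩ := hE.ext _ _ (LinearMap.range T).subtype Subtype.val_injective c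
  exact ⟨l, fun x => (hl (T.rangeRestrict x)).trans (hc x)⟩

theorem IsDual.sep (hE : IsDual K E) {M : Type u} [AddCommGroup M] [Module K M]
    (S : Submodule K M) (x : M) (hx : x ∉ S) :
    ∃ l : M →ₗ[K] E, (∀ y ∈ S, l y = 0) ∧ l x ≠ 0 := by
  obtain ⟨g, hg⟩ := hE.cogen (M ⧸ S) (S.mkQ x) (by
    simpa [Submodule.Quotient.mk_eq_zero] using hx)
  refine ⟨g.comp S.mkQ, fun y hy => ?_, hg⟩
  have : S.mkQ y = 0 := (Submodule.Quotient.mk_eq_zero S).2 hy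
  simp [this]

/-- The `K`-structure on a module. -/
@[reducible] def modK (K : Type u) {R : Type u} [CommRing K] [Ring R] [Algebra K R] (X : ModA R) :
    Module K X.M := Module.compHom X.M (algebraMap K R)

attribute [local instance] modK

theorem towerK (X : ModA R) : IsScalarTower K R X.M where
  smul_assoc k r x := by
    change (k • r) • x = algebraMap K R k • (r • x)
    rw [← mul_smul, Algebra.smul_def]

attribute [local instance] towerK

theorem commK (X : ModA R) : SMulCommClass K R X.M := IsScalarTower.to_smulCommClass

theorem commK' (X : ModA R) : SMulCommClass R K X.M := IsScalarTower.to_smulCommClass'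

attribute [local instance] commK commK'

theorem finK [Module.Finite K R] (X : ModA R) : Module.Finite K X.M :=
  Module.Finite.trans R X.M

theorem isNoethK [IsArtinianRing K] (M : Type u) [AddCommGroup M] [Module R M] [Module K M]
    [IsScalarTower K R M] [Module.Finite K M] : IsNoetherian R M :=
  isNoetherian_of_tower K inferInstance

theorem isArtK [IsArtinianRing K] (M : Type u) [AddCommGroup M] [Module R M] [Module K M]
    [IsScalarTower K R M] [Module.Finite K M] : IsArtinian R M :=
  isArtinian_of_tower K inferInstance

theorem bij_of_inj {X : ModA R} (f : X.M →ₗ[R] X.M) (h : Function.Injective f) :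
    Function.Bijective f := ⟨h, IsArtinian.surjective_of_injective_endomorphism f h⟩

theorem exists_phi (hE : IsDual K E) {X : ModA R} (hX : X.IsIndec) :
    ∃ φ : (X.M →ₗ[R] X.M) →ₗ[K] E, (∀ h : X.M →ₗ[R] X.M, ¬ Function.Bijective h → φ h = 0) ∧
      φ LinearMap.id ≠ 0 := by
  let S : Submodule K (X.M →ₗ[R] X.M) :=
    { carrier := {h | ¬ Function.Bijective h}
      zero_mem' := by
        intro h
        have := hX.1
        obtain ⟨x, hx⟩ := exists_ne (0 : X.M)
        exact hx (h.1 (by simp))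
      add_mem' := by
        intro f g hf hg hb
        let u := LinearEquiv.ofBijective _ hb
        have hu : u.symm.toLinearMap.comp f + u.symm.toLinearMap.comp g = LinearMap.id := by
          rw [← LinearMap.comp_add]
          ext x
          exact u.symm_apply_apply x
        rcases bij_or_bij hX _ _ hu with h | h
        · exact hf (bij_of_inj f (Function.Injective.of_comp (f := u.symm) h.1))
        · exact hg (bij_of_inj g (Function.Injective.of_comp (f := u.symm) h.1))
      smul_mem' := by
        intro k h hh hb
        apply hh
        apply bij_of_inj
        intro x y hxy
        apply hb.1
        simp [hxy] }
  obtain ⟨φ, h1, h2⟩ := hE.sep S LinearMap.id (fun h => h Function.bijective_id)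
  exact ⟨φ, h1, h2⟩

theorem exists_psi (hE : IsDual K E) {X : ModA R} (hX : X.IsIndec) :
    ∃ (n : ℕ) (x : Fin n → X.M) (ψ : (Fin n → X.M) →ₗ[K] E),
      Submodule.span R (Set.range x) = ⊤ ∧
      (∀ h : X.M →ₗ[R] X.M, ¬ Function.Bijective h → ψ (fun i => h (x i)) = 0) ∧ ψ x ≠ 0 := by
  obtain ⟨φ, h1, h2⟩ := exists_phi hE hX
  obtain ⟨n, x, hx⟩ := Submodule.fg_iff_exists_fin_generating_family.1
    (IsNoetherian.noetherian (⊤ : Submodule R X.M))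
  let e : (X.M →ₗ[R] X.M) →ₗ[K] (Fin n → X.M) :=
    { toFun := fun h i => h (x i)
      map_add' := fun _ _ => rfl
      map_smul' := fun _ _ => rfl }
  have he : Function.Injective e := by
    intro f g hfg
    apply LinearMap.ext_on_range hx
    exact fun i => congrFun hfg i
  obtain ⟨ψ, hψ⟩ := hE.ext _ _ e he φ
  exact ⟨n, x, ψ, hx, fun h hh => (hψ h).trans (h1 h hh), fun h => h2 ((hψ LinearMap.id).symm.trans h)⟩

/-- Multiplication by a matrix. -/
def matMap (K : Type u) {R : Type u} [CommRing K] [Ring R] [Algebra K R] (Z : ModA R) {n m : ℕ}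
    (ρ : Fin m → Fin n → R) : (Fin n → Z.M) →ₗ[K] (Fin m → Z.M) where
  toFun z j := ∑ i, ρ j i • z i
  map_add' z z' := by ext j; simp [Finset.sum_add_distrib]
  map_smul' k z := by
    ext j
    change ∑ i, ρ j i • k • z i = k • ∑ i, ρ j i • z i
    rw [Finset.smul_sum]
    exact Finset.sum_congr rfl fun i _ => smul_comm _ _ _

theorem matMap_apply (Z : ModA R) {n m : ℕ} (ρ : Fin m → Fin n → R) (z : Fin n → Z.M) (j) :
    matMap K Z ρ z j = ∑ i, ρ j i • z i := rfl

/-- multiplication on an element. -/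
def orb (K : Type u) {R : Type u} [CommRing K] [Ring R] [Algebra K R] {Z : ModA R} (z : Z.M) :
    R →ₗ[K] Z.M where
  toFun r := r • z
  map_add' _ _ := add_smul _ _ _
  map_smul' k r := smul_assoc k r z

theorem orb_apply {Z : ModA R} (z : Z.M) (r : R) : orb K z r = r • z := rfl

theorem sum_single_apply {n : ℕ} {Z : Type u} [AddCommGroup Z] [Module K Z]
    (l : (Fin n → Z) →ₗ[K] E) (z : Fin n → Z) :
    l z = ∑ i, l (Pi.single i (z i)) := by
  rw [← map_sum, Finset.univ_sum_single]

theorem exists_sink [IsArtinianRing K] [Module.Finite K R] (hE : IsDual K E) {X : ModA R}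
    (hX : X.IsIndec) : ∃ (M : ModA R) (g : M.M →ₗ[R] X.M), IsSink g := by
  obtain ⟨n, x, ψ, hx, hψ, hψ1⟩ := exists_psi hE hX
  have iN : IsNoetherian R (Fin n → R) := isNoethK (K := K) _
  let π : (Fin n → R) →ₗ[R] X.M := Fintype.linearCombination R x
  have hπ : ∀ s, π s = ∑ i, s i • x i := fun s => Fintype.linearCombination_apply R x s
  have hπs : Function.Surjective π := by
    rw [← LinearMap.range_eq_top, Fintype.range_linearCombination, hx]
  obtain ⟨m, ρ, hρ⟩ := Submodule.fg_iff_exists_fin_generating_family.1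
    (IsNoetherian.noetherian (LinearMap.ker π))
  have hρ0 : ∀ j, ∑ i, ρ j i • x i = 0 := by
    intro j
    rw [← hπ]
    have : ρ j ∈ LinearMap.ker π := hρ ▸ Submodule.subset_span ⟨j, rfl⟩
    exact this
  have hker : ∀ (Z : ModA R) (z : Fin n → Z.M), matMap K Z ρ z = 0 →
      ∃ v : X.M →ₗ[R] Z.M, ∀ i, v (x i) = z i := by
    intro Z z hz
    obtain ⟨v, hv⟩ := fact_epi π hπs (Fintype.linearCombination R z) (by
      intro s hs
      have hs' : s ∈ Submodule.span R (Set.range ρ) := hρ ▸ hs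
      have : Submodule.span R (Set.range ρ) ≤ LinearMap.ker (Fintype.linearCombination R z) := by
        rw [Submodule.span_le]
        rintro _ ⟨j, rfl⟩
        exact congrFun hz j
      exact this hs')
    refine ⟨v, fun i => ?_⟩
    have := hv (Pi.single i 1)
    rw [hπ] at this
    simpa [Pi.single_apply, Fintype.linearCombination_apply] using this
  let N := Nu K R E
  have iF : Module.Finite K N := hE.fin R inferInstance
  have iN2 : IsNoetherian R N := isNoethK (K := K) _
  have iA2 : IsArtinian R N := isArtK (K := K) _
  let P : Submodule R (X.M × (Fin m → N)) :=
    { carrier := {a | ∀ i s, ψ (Pi.single i (s • a.1)) = ∑ j, (a.2 j).ev (ρ j i * s)}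
      zero_mem' := by
        intro i s
        simp only [Prod.fst_zero, smul_zero, Pi.single_zero, map_zero, Prod.snd_zero]
        symm
        apply Finset.sum_eq_zero
        intro j _
        rfl
      add_mem' := by
        intro a b ha hb i s
        have : ∀ j, ((a + b).2 j).ev (ρ j i * s) = (a.2 j).ev (ρ j i * s) +
          (b.2 j).ev (ρ j i * s) := fun j => rfl
        simp only [this, Finset.sum_add_distrib, ← ha i s, ← hb i s]
        rw [← map_add, ← Pi.single_add, ← smul_add]
        rfl
      smul_mem' := by
        intro r a ha i s
        have : ∀ j, ((r • a).2 j).ev (ρ j i * s) = (a.2 j).ev (ρ j i * (s * r)) := by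
          intro j
          rw [← mul_assoc]; rfl
        simp only [this]
        rw [← ha i (s * r), mul_smul]
        rfl }
  refine ⟨ofM R P, (LinearMap.fst R _ _).comp P.subtype, ?_, ?_⟩
  · rintro ⟨σ, hσ⟩
    apply hψ1
    have h1 : ∀ v, (σ v).1.1 = v := fun v => LinearMap.congr_fun hσ v
    let F : Fin m → (X.M →ₗ[R] N) := fun j =>
      (LinearMap.proj j).comp ((LinearMap.snd R _ _).comp (P.subtype.comp σ))
    have h2 : ∀ v i s, ψ (Pi.single i (s • v)) = ∑ j, (F j v).ev (ρ j i * s) := by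
      intro v i s
      have := (σ v).2 i s
      rw [h1] at this
      exact this
    have hadd : ∀ (t : Finset (Fin n)) (f : Fin n → N), (∑ i ∈ t, f i).ev 1 =
        ∑ i ∈ t, (f i).ev 1 := by
      intro t f
      exact LinearMap.sum_apply t _ _
    rw [sum_single_apply]
    have h3 : ∀ i, ψ (Pi.single i (x i)) = ∑ j, (F j (ρ j i • x i)).ev 1 := by
      intro i
      have := h2 (x i) i 1
      rw [one_smul] at this
      rw [this]
      refine Finset.sum_congr rfl fun j _ => ?_
      rw [map_smul, Nu.ev_smul, mul_one, one_mul]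
    rw [Finset.sum_congr rfl fun i _ => h3 i, Finset.sum_comm]
    apply Finset.sum_eq_zero
    intro j _
    rw [← hadd, ← map_sum, hρ0, map_zero]
    rfl
  · intro Z h hh
    obtain ⟨l, hl⟩ := hE.ext_ker (matMap K Z ρ)
      (ψ.comp ({ toFun := fun z i => h (z i)
                 map_add' := fun a b => by ext i; simp
                 map_smul' := fun k a => by
                  ext i
                  exact h.map_smul (algebraMap K R k) (a i) } :
                  (Fin n → Z.M) →ₗ[K] (Fin n → X.M))) (by
        intro z hz
        obtain ⟨v, hv⟩ := hker Z z hz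
        have := hψ (h.comp v) (fun hb => hh (splitEpi_of_bij v h hb))
        simpa [hv] using this)
    have hl' : ∀ z, l (matMap K Z ρ z) = ψ (fun i => h (z i)) := hl
    let h' : Z.M →ₗ[R] X.M × (Fin m → N) := h.prod (LinearMap.pi fun j =>
      { toFun := fun z => Nu.of ((l.comp (LinearMap.single K (fun _ => Z.M) j)).comp (orb K z))
        map_add' := fun a b => Nu.ext fun s => by
          change l (Pi.single j (s • (a + b))) = l (Pi.single j (s • a)) + l (Pi.single j (s • b))
          rw [smul_add, Pi.single_add, map_add]
        map_smul' := fun r a => Nu.ext fun s => by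
          change l (Pi.single j (s • (r • a))) = l (Pi.single j ((s * r) • a))
          rw [mul_smul] })
    have hP : ∀ z, h' z ∈ P := by
      intro z i s
      have h1 := hl' (Pi.single i (s • z))
      have h2 : (fun i' => h ((Pi.single i (s • z) : Fin n → Z.M) i')) =
        Pi.single i (s • h z) := by
        ext i'
        rcases eq_or_ne i' i with rfl | hne
        · simp
        · simp [Pi.single_eq_of_ne hne]
      rw [h2] at h1
      change ψ (Pi.single i (s • h z)) = ∑ j, l (Pi.single j ((ρ j i * s) • z))
      rw [← h1, sum_single_apply]
      refine Finset.sum_congr rfl fun j _ => ?_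
      congr 2
      rw [matMap_apply, Finset.sum_eq_single i]
      · simp [mul_smul]
      · intro b _ hb; simp [Pi.single_eq_of_ne hb]
      · simp
    exact ⟨LinearMap.codRestrict P h' hP, by ext z; rfl⟩

end exist
end ARProof

namespace ARProof

section exist2

variable {K R : Type u} [CommRing K] [Ring R] [Algebra K R]
variable {E : Type u} [AddCommGroup E] [Module K E]

attribute [local instance] modK towerK commK commK'

theorem exists_w (hE : IsDual K E) {Y : ModA R} (hY : Y.IsIndec) {p : ℕ}
    (ξ : Fin p → (Y.M →ₗ[K] E)) (hξ : Submodule.span K (Set.range ξ) = ⊤) :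
    ∃ w : Fin p → Y.M,
      (∀ h : Y.M →ₗ[R] Y.M, ¬ Function.Bijective h → ∑ i, ξ i (h (w i)) = 0) ∧
      ∑ i, ξ i (w i) ≠ 0 := by
  obtain ⟨n, x, ψ, hx, hψ, hψ1⟩ := exists_psi hE hY
  have hc : ∀ k : Fin n, ∃ c : Fin p → K, ∑ i, c i • ξ i =
      ψ.comp (LinearMap.single K (fun _ => Y.M) k) := by
    intro k
    have : ψ.comp (LinearMap.single K (fun _ => Y.M) k) ∈ Submodule.span K (Set.range ξ) := by
      rw [hξ]; trivial
    exact (Submodule.mem_span_range_iff_exists_fun K).1 this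
  choose c hc using hc
  have key : ∀ h : Y.M →ₗ[R] Y.M, ∑ i, ξ i (h (∑ k, c k i • x k)) = ψ (fun k => h (x k)) := by
    intro h
    rw [sum_single_apply ψ]
    have h1 : ∀ k, ψ (Pi.single k (h (x k))) = ∑ i, c k i • ξ i (h (x k)) := by
      intro k
      have := LinearMap.congr_fun (hc k) (h (x k))
      simpa [LinearMap.sum_apply] using this.symm
    rw [Finset.sum_congr rfl fun k _ => h1 k, Finset.sum_comm]
    refine Finset.sum_congr rfl fun i _ => ?_
    rw [map_sum, map_sum]
    refine Finset.sum_congr rfl fun k _ => ?_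
    rw [← map_smul]
    congr 1
    exact h.map_smul (algebraMap K R (c k i)) (x k)
  refine ⟨fun i => ∑ k, c k i • x k, fun h hh => (key h).trans (hψ h hh), ?_⟩
  have := key LinearMap.id
  simp only [LinearMap.id_apply] at this
  rw [this]
  exact hψ1

theorem exists_source [IsArtinianRing K] [Module.Finite K R] (hE : IsDual K E) {Y : ModA R}
    (hY : Y.IsIndec) : ∃ (M : ModA R) (f : Y.M →ₗ[R] M.M), IsSource f := by
  have iY : Module.Finite K Y.M := finK Y
  have iYs : Module.Finite K (Y.M →ₗ[K] E) := hE.fin Y.M iY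
  obtain ⟨p, ξ, hξ⟩ := Submodule.fg_iff_exists_fin_generating_family.1 iYs.fg_top
  obtain ⟨w, hw, hw1⟩ := exists_w hE hY ξ hξ
  -- the pairing
  let B : (Fin p → R) →ₗ[K] (Y.M →ₗ[K] E) :=
    { toFun := fun ρ =>
        { toFun := fun y => ∑ i, ξ i (ρ i • y)
          map_add' := fun a b => by simp [Finset.sum_add_distrib]
          map_smul' := fun k a => by
            rw [RingHom.id_apply, Finset.smul_sum]
            refine Finset.sum_congr rfl fun i _ => ?_
            rw [smul_comm, map_smul] }
      map_add' := fun a b => by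
        ext y
        simp [Finset.sum_add_distrib, add_smul]
      map_smul' := fun k a => by
        ext y
        simp [Finset.smul_sum] }
  have hB : ∀ ρ y, B ρ y = ∑ i, ξ i (ρ i • y) := fun _ _ => rfl
  have hBs : Function.Surjective B := by
    rw [← LinearMap.range_eq_top, eq_top_iff, ← hξ, Submodule.span_le]
    rintro _ ⟨i, rfl⟩
    refine ⟨Pi.single i 1, ?_⟩
    ext y
    rw [hB, Finset.sum_eq_single i]
    · simp
    · intro b _ hb; simp [Pi.single_eq_of_ne hb]
    · simp
  obtain ⟨m, ρ, hρ⟩ := Submodule.fg_iff_exists_fin_generating_family.1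
    (IsNoetherian.noetherian (LinearMap.ker B))
  have hρ0 : ∀ j y, ∑ i, ξ i (ρ j i • y) = 0 := by
    intro j y
    rw [← hB]
    have : ρ j ∈ LinearMap.ker B := hρ ▸ Submodule.subset_span ⟨j, rfl⟩
    exact LinearMap.congr_fun this y
  have iN : IsNoetherian R R := isNoethK (K := K) _
  have iA : IsArtinian R R := isArtK (K := K) _
  let D : (Fin p → R) →ₗ[R] Y.M × (Fin m → R) :=
    (Fintype.linearCombination R w).prod
      (-(LinearMap.pi fun j => Fintype.linearCombination R (fun i => ρ j i)))
  have hD1 : ∀ r, (D r).1 = ∑ i, r i • w i := fun r => rfl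
  have hD2 : ∀ r j, (D r).2 j = - ∑ i, r i * ρ j i := fun r j => rfl
  let M0 : ModA R := ofM R ((Y.M × (Fin m → R)) ⧸ LinearMap.range D)
  let q : Y.M × (Fin m → R) →ₗ[R] M0.M := (LinearMap.range D).mkQ
  have hqs : Function.Surjective q := Submodule.mkQ_surjective _
  have hq0 : ∀ x, q x = 0 ↔ ∃ r, D r = x := fun x =>
    Submodule.Quotient.mk_eq_zero (LinearMap.range D)
  clear_value q
  refine ⟨M0, q.comp (LinearMap.inl R _ _), ?_, ?_⟩
  · rintro ⟨σ, hσ⟩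
    have hσ' : ∀ y, σ (q (y, 0)) = y := fun y => LinearMap.congr_fun hσ y
    let c : (Fin m → R) →ₗ[R] Y.M := σ.comp (q.comp (LinearMap.inr R _ _))
    let z : Fin m → Y.M := fun j => c (Pi.single j 1)
    have hcz : ∀ t, c t = ∑ j, t j • z j := by
      intro t
      have : t = ∑ j, t j • (Pi.single j (1 : R) : Fin m → R) := by
        ext j; simp [Finset.sum_apply, Pi.single_apply]
      conv_lhs => rw [this]
      rw [map_sum]
      simp [z]
    apply hw1
    have h1 : ∀ i, w i = ∑ j, ρ j i • z j := by
      intro i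
      have h2 : q (D (Pi.single i 1)) = 0 := (hq0 _).2 ⟨_, rfl⟩
      have h3 : D (Pi.single i 1) = (w i, 0) - (0, fun j => ρ j i) := by
        apply Prod.ext
        · rw [hD1, Finset.sum_eq_single i]
          · simp
          · intro b _ hb; simp [Pi.single_eq_of_ne hb]
          · simp
        · funext j
          rw [hD2, Finset.sum_eq_single i]
          · simp
          · intro b _ hb; simp [Pi.single_eq_of_ne hb]
          · simp
      rw [h3, map_sub, sub_eq_zero] at h2
      have h4 := congrArg σ h2
      rw [hσ'] at h4
      rw [h4]
      exact hcz _
    have h2 : ∀ i, ξ i (w i) = ∑ j, ξ i (ρ j i • z j) := by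
      intro i
      conv_lhs => rw [h1 i]
      rw [map_sum]
    rw [Finset.sum_congr rfl fun i _ => h2 i, Finset.sum_comm]
    exact Finset.sum_eq_zero fun j _ => hρ0 j (z j)
  · intro Z f hf
    let T : (Fin m → Z.M) →ₗ[K] (Fin p → Z.M) := matMap K Z (fun i j => ρ j i)
    have hT : ∀ z i, T z i = ∑ j, ρ j i • z j := fun _ _ => rfl
    by_cases hz : (fun i => f (w i)) ∈ LinearMap.range T
    · obtain ⟨z, hz⟩ := hz
      have hz' : ∀ i, ∑ j, ρ j i • z j = f (w i) := fun i => congrFun hz i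
      obtain ⟨h', hh'⟩ := fact_epi q hqs (f.coprod (Fintype.linearCombination R z)) (by
        intro x hx
        obtain ⟨r, rfl⟩ := (hq0 x).1 hx
        simp only [LinearMap.coprod_apply, Fintype.linearCombination_apply, hD1, hD2, map_sum,
          map_smul, ← hz', neg_smul, Finset.sum_neg_distrib]
        simp only [Finset.sum_smul, Finset.smul_sum, mul_smul]
        rw [Finset.sum_comm, add_neg_cancel])
      refine ⟨h', ?_⟩
      ext y
      simp [hh']
    · exfalso
      obtain ⟨l, hl, hl1⟩ := hE.sep _ _ hz
      apply hl1
      have hv : ∀ z : Z.M, ∃ y : Y.M, ∀ r : Fin p → R,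
          ∑ i, ξ i (r i • y) = ∑ i, l (Pi.single i (r i • z)) := by
        intro z
        let μ : (Fin p → R) →ₗ[K] E :=
          ∑ i, ((l.comp (LinearMap.single K (fun _ => Z.M) i)).comp (orb K z)).comp
            (LinearMap.proj i)
        have hμ : ∀ r, μ r = ∑ i, l (Pi.single i (r i • z)) := by
          intro r
          simp only [μ, LinearMap.sum_apply]
          rfl
        obtain ⟨Φ, hΦ⟩ := fact_epi B hBs μ (by
          have : LinearMap.ker B ≤ LinearMap.ker μ := by
            rw [← hρ, Submodule.span_le]
            rintro _ ⟨j, rfl⟩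
            change μ (ρ j) = 0
            rw [hμ]
            have h1 := hl _ ⟨Pi.single j z, rfl⟩
            rw [sum_single_apply] at h1
            rw [← h1]
            refine Finset.sum_congr rfl fun i _ => ?_
            congr 2
            rw [hT, Finset.sum_eq_single j]
            · simp
            · intro b _ hb; simp [Pi.single_eq_of_ne hb]
            · simp
          exact fun x hx => this hx)
        obtain ⟨y, hy⟩ := hE.dd Y.M Φ
        refine ⟨y, fun r => ?_⟩
        rw [← hμ, ← hΦ, hy, hB]
      choose v hv using hv
      have uniq : ∀ y y' : Y.M, (∀ r : Fin p → R,
          ∑ i, ξ i (r i • y) = ∑ i, ξ i (r i • y')) → y = y' := by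
        intro y y' h
        by_contra hne
        obtain ⟨g, hg⟩ := hE.cogen Y.M (y - y') (sub_ne_zero.2 hne)
        obtain ⟨r, rfl⟩ := hBs g
        apply hg
        rw [map_sub, hB, hB, h, sub_self]
      let V : Z.M →ₗ[R] Y.M :=
        { toFun := v
          map_add' := fun a b => uniq _ _ fun r => by
            rw [hv]
            simp only [smul_add, map_add, Finset.sum_add_distrib, hv, Pi.single_add]
          map_smul' := fun s a => uniq _ _ fun r => by
            rw [hv, RingHom.id_apply]
            have := hv a (fun i => r i * s)
            simp only [mul_smul] at this
            exact this.symm }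
      have h1 := hw (V.comp f) (fun hb => hf (splitMono_of_bij f V hb))
      rw [sum_single_apply, ← h1]
      refine Finset.sum_congr rfl fun i _ => ?_
      have h2 := hv (f (w i)) (Pi.single i 1)
      rw [Finset.sum_eq_single i, Finset.sum_eq_single i] at h2
      · simp only [Pi.single_eq_same, one_smul] at h2
        exact h2.symm
      · intro b _ hb; simp [Pi.single_eq_of_ne hb]
      · simp
      · intro b _ hb; simp [Pi.single_eq_of_ne hb]
      · simp

variable (K) in
/-- Existence of almost split sequences ending at a nonprojective indecomposable. -/
theorem exists_AR_right [IsArtinianRing K] [Module.Finite K R] {X : ModA R} (hX : X.IsIndec)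
    (hp : ¬ Module.Projective R X.M) : ∃ s : AlmostSplitSeq R, s.r = X := by
  obtain ⟨E, _, _, hE⟩ := exists_isDual K
  obtain ⟨M₀, g₀, h₀⟩ := exists_sink hE hX
  refine exists_AR_of_sink hX g₀ h₀ fun M g hg => ?_
  have iN : IsNoetherian R R := isNoethK (K := K) _
  have iA : IsArtinian R R := isArtK (K := K) _
  obtain ⟨n, π, hπ⟩ := Module.Finite.exists_fin' R X.M
  obtain ⟨h', hh'⟩ := hg.2 (ofM R (Fin n → R)) π (by
    rintro ⟨s, hs⟩
    have : Module.Projective R (ofM R (Fin n → R)).M :=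
      inferInstanceAs (Module.Projective R (Fin n → R))
    exact hp (Module.Projective.of_split s π hs))
  intro x
  obtain ⟨y, rfl⟩ := hπ x
  exact ⟨h' y, LinearMap.congr_fun hh' y⟩

variable (K) in
/-- Existence of almost split sequences starting at a noninjective indecomposable. -/
theorem exists_AR_left [IsArtinianRing K] [Module.Finite K R] {Y : ModA R} (hY : Y.IsIndec)
    (hp : ¬ Module.Injective R Y.M) : ∃ s : AlmostSplitSeq R, s.l = Y := by
  obtain ⟨E, _, _, hE⟩ := exists_isDual K
  obtain ⟨M₀, f₀, h₀⟩ := exists_source hE hY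
  refine exists_AR_of_source hY f₀ h₀ fun M f hf => ?_
  have iN : IsNoetherian R R := isNoethK (K := K) _
  have iA : IsArtinian R R := isArtK (K := K) _
  have hb : ¬ Module.Baer R Y.M := fun h => hp h.injective
  unfold Module.Baer at hb
  push Not at hb
  obtain ⟨I, g, hI⟩ := hb
  let D : I →ₗ[R] Y.M × R := g.prod (-I.subtype)
  let P : ModA R := ofM R ((Y.M × R) ⧸ LinearMap.range D)
  let q : Y.M × R →ₗ[R] P.M := (LinearMap.range D).mkQ
  have hq0 : ∀ x, q x = 0 ↔ ∃ r, D r = x := fun x =>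
    Submodule.Quotient.mk_eq_zero (LinearMap.range D)
  clear_value q
  have hinj : Function.Injective (q.comp (LinearMap.inl R Y.M R)) := by
    rw [injective_iff_map_eq_zero]
    intro y hy
    obtain ⟨r, hr⟩ := (hq0 _).1 hy
    have h1 : g r = y := congrArg Prod.fst hr
    have h2 : -(r : R) = 0 := congrArg Prod.snd hr
    have h3 : r = 0 := Subtype.ext (neg_eq_zero.1 h2)
    rw [← h1, h3, map_zero]
  obtain ⟨h', hh'⟩ := hf.2 P (q.comp (LinearMap.inl R Y.M R)) (by
    rintro ⟨σ, hσ⟩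
    have hσ' : ∀ y, σ (q (y, 0)) = y := fun y => LinearMap.congr_fun hσ y
    obtain ⟨x, hx, hne⟩ := hI (σ.comp (q.comp (LinearMap.inr R Y.M R)))
    apply hne
    have h0 : q (D ⟨x, hx⟩) = 0 := (hq0 _).2 ⟨_, rfl⟩
    have h1 : D ⟨x, hx⟩ = (g ⟨x, hx⟩, 0) - (0, x) := by
      apply Prod.ext
      · simp [D]
      · simp [D]
    rw [h1, map_sub, sub_eq_zero] at h0
    have := congrArg σ h0
    rw [hσ'] at this
    exact this.symm)
  intro a b hab
  apply hinj
  rw [← hh', LinearMap.comp_apply, LinearMap.comp_apply, hab]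

end exist2
end ARProof

namespace ARProof

section comb
variable {V : Type*} {A T : V → V → Prop} {Γ : Set V}

theorem comb_lemma (hT : ∀ a b, T a b → ∀ z, A z b ↔ A a z)
    (hS : ∀ x ∈ Γ, Relation.TransGen A x x)
    (hcl : ∀ x ∈ Γ, ∀ y, Relation.TransGen A y y → A x y ∨ A y x → y ∈ Γ)
    (hne : Γ.Nonempty) (hfin : Γ.Finite) (hex : ∀ x ∈ Γ, ∃ a, T a x) :
    ∃ U ⊆ Γ, U.Nonempty ∧ ∀ x ∈ U, ∀ z, A z x → z ∈ U := by
  have hex' : ∀ x, ∃ a, x ∈ Γ → T a x := by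
    intro x
    by_cases hx : x ∈ Γ
    · obtain ⟨a, ha⟩ := hex x hx
      exact ⟨a, fun _ => ha⟩
    · exact ⟨x, fun h => absurd h hx⟩
  choose t ht using hex'
  have h1 : ∀ x ∈ Γ, ∀ b, Relation.TransGen A x b → Relation.ReflTransGen A b x →
      b ∈ Γ ∧ Relation.TransGen A (t x) (t b) := by
    have step : ∀ b ∈ Γ, ∀ c ∈ Γ, A b c → A (t b) (t c) := fun b hb c hc hbc =>
      (hT _ _ (ht b hb) _).1 ((hT _ _ (ht c hc) _).1 hbc)
    intro x hx b hb
    induction hb with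
    | single h =>
      intro hr
      have hb := hcl x hx _ (Relation.TransGen.tail' hr h) (Or.inl h)
      exact ⟨hb, Relation.TransGen.single (step x hx _ hb h)⟩
    | tail h1 h2 ih =>
      intro hr
      obtain ⟨hb, hb'⟩ := ih (hr.head h2)
      have hc := hcl _ hb _ (Relation.TransGen.tail' (hr.trans h1.to_reflTransGen) h2) (Or.inl h2)
      exact ⟨hc, hb'.tail (step _ hb _ hc h2)⟩
  have h2 : ∀ x ∈ Γ, t x ∈ Γ := by
    intro x hx
    have hc := (h1 x hx x (hS x hx) .refl).2
    obtain ⟨z, hxz, hzx⟩ := Relation.TransGen.tail'_iff.1 (hS x hx)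
    have hz := hcl x hx z (Relation.TransGen.head' hzx hxz) (Or.inr hzx)
    exact hcl z hz (t x) hc (Or.inr ((hT _ _ (ht x hx) z).1 hzx))
  let pre : Preorder V :=
    { le := Relation.ReflTransGen A
      le_refl := fun _ => .refl
      le_trans := fun _ _ _ h h' => h.trans h' }
  obtain ⟨m, hm⟩ := hfin.exists_minimal hne
  refine ⟨{x | x ∈ Γ ∧ ∀ y ∈ Γ, Relation.ReflTransGen A y x → Relation.ReflTransGen A x y},
    fun x hx => hx.1, ⟨m, hm.1, fun y hy h => hm.2 hy h⟩, ?_⟩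
  rintro x ⟨hx, hmin⟩ z hzx
  have htz := (hT _ _ (ht x hx) z).1 hzx
  have hxt := hmin (t x) (h2 x hx) ((Relation.ReflTransGen.single hzx).head htz)
  have hzz : Relation.TransGen A z z := Relation.TransGen.head' hzx (hxt.tail htz)
  refine ⟨hcl x hx z hzz (Or.inr hzx), fun y hy hyz => ?_⟩
  exact (hmin y hy (hyz.tail hzx)).head hzx

end comb

section vert
variable {R : Type u} [Ring R]

theorem mk_eq {X Y : IndecModA R} (h : ARVertex.mk X = ARVertex.mk Y) : X.1.Iso Y.1 :=
  Quotient.exact h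

theorem mk_eq' {X Y : IndecModA R} (h : X.1.Iso Y.1) : ARVertex.mk X = ARVertex.mk Y :=
  Quotient.sound h

theorem exists_mk (x : ARVertex R) : ∃ X : IndecModA R, ARVertex.mk X = x := Quotient.exists_rep x

theorem arrow_mk {X Y : IndecModA R} (h : ARArrow (ARVertex.mk X) (ARVertex.mk Y)) :
    ∃ f : X.1.M →ₗ[R] Y.1.M, IsIrred f := by
  obtain ⟨X', Y', f, hf, hX, hY⟩ := h
  obtain ⟨e⟩ := mk_eq hX
  obtain ⟨e'⟩ := mk_eq hY
  exact ⟨_, irred_iso e.symm e' f hf⟩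

theorem tau_seq {x y : ARVertex R} (h : TauRel x y) : ∃ s : AlmostSplitSeq R,
    ARVertex.mk ⟨s.l, s.l_indec⟩ = x ∧ ARVertex.mk ⟨s.r, s.r_indec⟩ = y := by
  obtain ⟨X, Y, rfl, rfl, s, h1, h2⟩ := h
  exact ⟨s, mk_eq' h1, mk_eq' h2⟩

theorem seq_tau (s : AlmostSplitSeq R) :
    TauRel (ARVertex.mk ⟨s.l, s.l_indec⟩) (ARVertex.mk ⟨s.r, s.r_indec⟩) :=
  ⟨_, _, rfl, rfl, s, ⟨LinearEquiv.refl R _⟩, ⟨LinearEquiv.refl R _⟩⟩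

theorem tau_arrow (x y : ARVertex R) (h : TauRel x y) (z : ARVertex R) :
    ARArrow z y ↔ ARArrow x z := by
  obtain ⟨s, rfl, rfl⟩ := tau_seq h
  obtain ⟨Z, rfl⟩ := exists_mk z
  constructor
  · intro h
    obtain ⟨f, hf⟩ := arrow_mk h
    obtain ⟨i, p, hip⟩ := irred_to_r s f hf
    exact ⟨_, _, _, irred_pf s Z.2 i p hip, rfl, rfl⟩
  · intro h
    obtain ⟨f, hf⟩ := arrow_mk h
    obtain ⟨i, p, hip⟩ := irred_from_l s f hf
    exact ⟨_, _, _, irred_gi s Z.2 i p hip, rfl, rfl⟩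

theorem tau_not_proj {x y : ARVertex R} (h : TauRel x y) : ¬ IsProjVertex y := by
  obtain ⟨s, rfl, rfl⟩ := tau_seq h
  rintro ⟨Y, hY, hp⟩
  obtain ⟨e⟩ := mk_eq hY
  have : Module.Projective R s.r.M := Module.Projective.of_equiv e
  obtain ⟨σ, hσ⟩ := Module.projective_lifting_property s.g LinearMap.id s.surj
  exact s.not_split ⟨σ, hσ⟩

theorem tau_inj {x x' y : ARVertex R} (h : TauRel x y) (h' : TauRel x' y) : x = x' := by
  obtain ⟨s, rfl, rfl⟩ := tau_seq h
  obtain ⟨s', rfl, h2⟩ := tau_seq h'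
  obtain ⟨e⟩ := mk_eq h2
  exact mk_eq' (tau_unique s s' e.symm)

theorem tau_ex
    (K : Type u) [CommRing K] [IsArtinianRing K] [Algebra K R] [Module.Finite K R]
    {x : ARVertex R} (h : ¬ IsProjVertex x) : ∃ y, TauRel y x := by
  obtain ⟨X, rfl⟩ := exists_mk x
  obtain ⟨X, hX⟩ := X
  obtain ⟨s, rfl⟩ := exists_AR_right K hX (fun hp => h ⟨_, rfl, hp⟩)
  exact ⟨_, seq_tau s⟩

theorem tau_ex'
    (K : Type u) [CommRing K] [IsArtinianRing K] [Algebra K R] [Module.Finite K R]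
    {x : ARVertex R} (h : ¬ IsInjVertex x) : ∃ y, TauRel x y := by
  obtain ⟨X, rfl⟩ := exists_mk x
  obtain ⟨X, hX⟩ := X
  obtain ⟨s, rfl⟩ := exists_AR_left K hX (fun hp => h ⟨_, rfl, hp⟩)
  exact ⟨_, seq_tau s⟩

attribute [local instance] modK towerK commK commK'

theorem no_closed
    (K : Type u) [CommRing K] [IsArtinianRing K] [Algebra K R] [Module.Finite K R]
    (U : Set (ARVertex R)) (hfin : U.Finite) (hne : U.Nonempty)
    (hp : ∀ x ∈ U, ¬ IsProjVertex x) (hcl : ∀ x ∈ U, ∀ z, ARArrow z x → z ∈ U) : False := by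
  classical
  have : Fintype U := hfin.fintype
  have hrep : ∀ u : U, ∃ X : IndecModA R, ARVertex.mk X = u.1 := fun u => exists_mk u.1
  choose X hX using hrep
  let M := ∀ u : U, (X u).1.M
  have : ∀ u, Module.Finite K (X u).1.M := fun u => finK _
  have iF : Module.Finite K M := inferInstance
  have iA : IsArtinian R M := inferInstance
  let S := Module.End R M
  let ι : ∀ u, (X u).1.M →ₗ[R] M := fun u => LinearMap.single R (fun u => (X u).1.M) u
  let π : ∀ u, M →ₗ[R] (X u).1.M := fun u => LinearMap.proj u
  have hπι : ∀ u x, π u (ι u x) = x := fun u x =>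
    Pi.single_eq_same (M := fun u => (X u).1.M) u x
  have hJ : ∀ u v (h : (X v).1.M →ₗ[R] (X u).1.M), ¬ SplitMonoMap h →
      (((ι u).comp (h.comp (π v)) : M →ₗ[R] M) : S) ∈ Ring.jacobson S := by
    intro u v h hh
    rw [← Ideal.jacobson_bot, Ideal.mem_jacobson_iff]
    intro a
    let b : M →ₗ[R] M := LinearMap.id + LinearMap.comp a ((ι u).comp (h.comp (π v)))
    have hb : ∀ m, b m = m + a (ι u (h (π v m))) := fun m => rfl
    have hbi : Function.Injective b := by
      rw [injective_iff_map_eq_zero]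
      intro m hm
      rw [hb] at hm
      let c : (X u).1.M →ₗ[R] (X v).1.M := - (π v).comp (LinearMap.comp a (ι u))
      have hc : ∀ x, c x = - π v (a (ι u x)) := fun x => rfl
      have h1 : ¬ Function.Bijective (c.comp h) := fun hb => hh (splitMono_of_bij h c hb)
      have h2 := (bij_or_bij (X v).2 (c.comp h) (1 - c.comp h) (by abel)).resolve_left h1
      have h3 : π v m = 0 := by
        apply (injective_iff_map_eq_zero _).1 h2.1
        rw [LinearMap.sub_apply, LinearMap.comp_apply, hc, Module.End.one_apply, sub_neg_eq_add,
          ← map_add, hm, map_zero]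
      rw [h3] at hm
      simpa using hm
    let e := LinearEquiv.ofBijective b
      ⟨hbi, IsArtinian.surjective_of_injective_endomorphism b hbi⟩
    refine ⟨e.symm.toLinearMap, ?_⟩
    rw [Ideal.mem_bot, sub_eq_zero]
    apply LinearMap.ext
    intro m
    have h1 : e.symm (b m) = m := e.symm_apply_apply m
    rw [hb, map_add] at h1
    rw [Module.End.one_apply]
    refine Eq.trans ?_ h1
    exact add_comm _ _
  have hιJ : ∀ u x, ι u x ∈ Ring.jacobson S • (⊤ : Submodule S M) := by
    intro u x
    have hnp : ¬ Module.Projective R (X u).1.M := fun h => hp u.1 u.2 ⟨X u, hX u, h⟩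
    obtain ⟨s, hs⟩ := exists_AR_right K (X u).2 hnp
    obtain ⟨l, m, r, f, g, hf, hg, hex, hns, hl, hr, hra, hla⟩ := s
    dsimp only at hs
    subst hs
    obtain ⟨y, rfl⟩ := hg x
    have hind : ∀ e ∈ AddSubgroup.closure
      {e : m.M →ₗ[R] m.M | ∃ (Z : ModA R) (i : Z.M →ₗ[R] m.M) (p : m.M →ₗ[R] Z.M),
      Z.IsIndec ∧ p.comp i = LinearMap.id ∧ e = i.comp p},
        ι u (g (e y)) ∈ Ring.jacobson S • (⊤ : Submodule S M) := by
      intro e he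
      induction he using AddSubgroup.closure_induction with
      | mem e he =>
        obtain ⟨Z, i, p, hZ, hpi, rfl⟩ := he
        have hirr := irred_gi ⟨l, m, (X u).1, f, g, hf, hg, hex, hns, hl, hr, hra, hla⟩ hZ i p hpi
        have hZU : ARVertex.mk ⟨Z, hZ⟩ ∈ U :=
          hcl u.1 u.2 _ ⟨⟨Z, hZ⟩, X u, _, hirr, rfl, hX u⟩
        obtain ⟨θ⟩ := mk_eq (hX ⟨_, hZU⟩)
        have hirr2 := irred_iso θ (LinearEquiv.refl R (X u).1.M) _ hirr
        have hj := hJ u ⟨_, hZU⟩ _ hirr2.1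
        have := Submodule.smul_mem_smul hj
          (Submodule.mem_top (R := S) (x := ι ⟨_, hZU⟩ (θ.symm (p y))))
        convert this using 1
        rw [Module.End.smul_def]
        simp [hπι]
      | zero => simp
      | add a b _ _ ha hb =>
        rw [LinearMap.add_apply, map_add, map_add]
        exact add_mem ha hb
      | neg a _ ha =>
        rw [LinearMap.neg_apply, map_neg, map_neg]
        exact neg_mem ha
    exact hind _ (decomp m)
  have htow : IsScalarTower K S M := ⟨fun k f m => rfl⟩
  have hfg : Module.Finite S M := Module.Finite.of_restrictScalars_finite K S M
  have hbot := hfg.fg_top.eq_bot_of_le_jacobson_smul (by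
    intro m _
    have : m = ∑ u, ι u (m u) := (Finset.univ_sum_single m).symm
    rw [this]
    exact Submodule.sum_mem _ fun u _ => hιJ u _)
  obtain ⟨x, hx⟩ := hne
  have := (X ⟨x, hx⟩).2.1
  obtain ⟨a, ha⟩ := exists_ne (0 : (X ⟨x, hx⟩).1.M)
  have h0 : ι ⟨x, hx⟩ a = 0 := by
    have : ι ⟨x, hx⟩ a ∈ (⊤ : Submodule S M) := trivial
    rw [hbot] at this
    exact (Submodule.mem_bot S).1 this
  apply ha
  rw [← hπι ⟨x, hx⟩ a, h0, map_zero]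

theorem main_aux
    (K : Type u) [CommRing K] [IsArtinianRing K] [Algebra K R] [Module.Finite K R]
    (Γ : Set (ARVertex R)) (hΓ : IsCyclicComponent Γ) (hfin : Γ.Finite) :
    (∃ x ∈ Γ, IsProjVertex x) ∧ ∃ x ∈ Γ, IsInjVertex x := by
  obtain ⟨hS, hne, hcl, -⟩ := hΓ
  constructor
  · by_contra! h
    obtain ⟨U, hU, hUne, hUcl⟩ := comb_lemma (A := ARArrow) (T := TauRel) tau_arrow
      (fun x hx => hS hx) (fun x hx y hy hxy => hcl x hx y hy hxy) hne hfin
      (fun x hx => tau_ex K (h x hx))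
    exact no_closed K U (hfin.subset hU) hUne (fun x hx => h x (hU hx)) hUcl
  · by_contra! h
    have hsw : ∀ a b : ARVertex R, Relation.TransGen (Function.swap ARArrow) a b ↔
        Relation.TransGen ARArrow b a := fun a b => Relation.transGen_swap
    obtain ⟨U, hU, hUne, hUcl⟩ := comb_lemma (A := Function.swap (ARArrow (R := R)))
      (T := Function.swap (TauRel (R := R)))
      (fun a b hab z => (tau_arrow b a hab z).symm)
      (fun x hx => (hsw x x).2 (hS hx))
      (fun x hx y hy hxy => hcl x hx y ((hsw y y).1 hy) hxy.symm) hne hfin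
      (fun x hx => tau_ex' K (h x hx))
    have hUfin := hfin.subset hU
    have hs : ∀ x : U, ∃ y : U, TauRel x.1 y.1 := by
      intro x
      obtain ⟨y, hy⟩ := tau_ex' K (h x.1 (hU x.2))
      obtain ⟨z, hxz, -⟩ := Relation.TransGen.head'_iff.1 (hS (hU x.2) : OnARCycle x.1)
      have hz := hUcl x.1 x.2 z hxz
      exact ⟨⟨y, hUcl z hz y ((tau_arrow _ _ hy z).2 hxz)⟩, hy⟩
    choose s hs using hs
    have : Finite U := hUfin
    have hsi : Function.Injective s := by
      intro a b hab
      apply Subtype.ext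
      refine tau_inj (hs a) ?_
      rw [hab]; exact hs b
    have hss := Finite.surjective_of_injective hsi
    refine no_closed K U hUfin hUne ?_ ?_
    · intro x hx
      obtain ⟨y, hy⟩ := hss ⟨x, hx⟩
      have := tau_not_proj (hs y)
      rwa [hy] at this
    · intro x hx z hz
      obtain ⟨y, hy⟩ := hss ⟨x, hx⟩
      have := hs y
      rw [hy] at this
      exact hUcl y.1 y.2 z ((tau_arrow _ _ this z).1 hz)

end vert
end ARProof

/-- **Corollary.** Let `A` be a basic indecomposable artin algebra and `Γ` a finite
cyclic component of the Auslander-Reiten quiver `Γ_A`. Then `Γ` contains an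
indecomposable projective module and an indecomposable injective module. -/
theorem finite_cyclic_component_contains_proj_and_inj
    (K A : Type u) [CommRing K] [IsArtinianRing K] [Ring A] [Algebra K A]
    [Module.Finite K A] (hbasic : IsBasicAlgebra A) (hconn : IsConnectedAlgebra A)
    (Γ : Set (ARVertex Aᵐᵒᵖ)) (hΓ : IsCyclicComponent Γ) (hfin : Γ.Finite) :
    (∃ x ∈ Γ, IsProjVertex x) ∧ ∃ x ∈ Γ, IsInjVertex x := by
  exact ARProof.main_aux K Γ hΓ hfin
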